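/- The scheme nCT: ∀x(¬P(x) → ∃y Q'(x,y)) → ∃z ∀x (¬P(x) → ∃y (G(z,x,y) & Q'(x,y))), where P and Q' are predicate variables and G(z,x,y) is the arithmetical Σ-formula expressing {z}(x) = y, is absolutely realizable. -/

import Mathlib

namespace Cpc

/-! ### Recursion-theoretic preliminaries -/

/-- Kleene application `{e}(a)`: the unary partial recursive function with Gödel number `e`,
applied to `a`. -/
def K (e a : ℕ) : Part ℕ := Nat.Partrec.Code.eval (Denumerable.ofNat Nat.Partrec.Code e) a

/-- `(e)ᵢ`: the exponent of the `i`-th prime in the prime factorization of `e`. -/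
noncomputable def pexp (i e : ℕ) : ℕ := Nat.factorization e (Nat.nth Nat.Prime i)

/-! ### The Cantor pairing function and the enumeration `g` of finitely supported functions -/

/-- The Cantor pairing `c(x,y) = (x+y)(x+y+1)/2 + x`. -/
def cpair (x y : ℕ) : ℕ := (x + y) * (x + y + 1) / 2 + x

/-- Simultaneous computation of the two inverse projections of the Cantor pairing. -/
def lrAux : ℕ → ℕ × ℕ
  | 0 => (0, 0)
  | n + 1 =>
    let p := lrAux n
    if p.2 = 0 then (0, p.1 + 1) else (p.1 + 1, p.2 - 1)

/-- The first projection `l` of the Cantor pairing. -/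
def cl (n : ℕ) : ℕ := (lrAux n).1

/-- The second projection `r` of the Cantor pairing. -/
def cr (n : ℕ) : ℕ := (lrAux n).2

/-- `l*(x,y)`: `l*(x,0) = x`, `l*(x,y+1) = l(l*(x,y))`. -/
def lstar (x : ℕ) : ℕ → ℕ
  | 0 => x
  | y + 1 => cl (lstar x y)

/-- `g(x,y) = r(l*(x,y))`: the enumeration of all finitely supported functions `ℕ → ℕ`. -/
def g (x y : ℕ) : ℕ := cr (lstar x y)

/-- `h(x,y,0) = c(l(x),y)`, `h(x,y,z+1) = c(h(l(x),y,z), r(x))`. -/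
def h : ℕ → ℕ → ℕ → ℕ
  | x, y, 0 => cpair (cl x) y
  | x, y, z + 1 => cpair (h (cl x) y z) (cr x)


/-! ### The predicate language `L*` -/

/-- Individual terms of the language `L*`: individual variables (named by natural numbers)
and individual constants for all natural numbers. -/
inductive PTerm : Type
  | var (v : ℕ)
  | const (c : ℕ)
  deriving DecidableEq

/-- Evaluation of a term under a valuation of the individual variables. -/
def PTerm.eval (ρ : ℕ → ℕ) : PTerm → ℕ
  | var v => ρ v
  | const c => c

/-- The (free) variables of a term. -/
def PTerm.fv : PTerm → Finset ℕ
  | var v => {v}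
  | const _ => ∅

/-- Formulas of the predicate language `L*`: `⊥`, atomic formulas `Pⁿᵢ(t₁,…,tₙ)`
(where the predicate variable `Pⁿᵢ` is recorded by its index `i`; its arity `n` is the
length of the argument list), and the connectives and quantifiers. -/
inductive PFml : Type
  | bot
  | atom (i : ℕ) (args : List PTerm)
  | and (φ ψ : PFml)
  | or (φ ψ : PFml)
  | imp (φ ψ : PFml)
  | all (x : ℕ) (φ : PFml)
  | ex (x : ℕ) (φ : PFml)

/-- `¬Φ` abbreviates `Φ → ⊥`. -/
def PFml.not (φ : PFml) : PFml := φ.imp .bot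

/-- `Φ ↔ Ψ` abbreviates `(Φ → Ψ) & (Ψ → Φ)`. -/
def PFml.iff (φ ψ : PFml) : PFml := (φ.imp ψ).and (ψ.imp φ)

/-- Conjunction of a list of formulas. -/
def bigAnd (l : List PFml) : PFml := l.foldr PFml.and (PFml.bot.imp PFml.bot)

/-- The free variables of a formula. -/
def PFml.fv : PFml → Finset ℕ
  | bot => ∅
  | atom _ args => args.foldr (fun t s => t.fv ∪ s) ∅
  | and φ ψ => φ.fv ∪ ψ.fv
  | or φ ψ => φ.fv ∪ ψ.fv
  | imp φ ψ => φ.fv ∪ ψ.fv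
  | all x φ => φ.fv.erase x
  | ex x φ => φ.fv.erase x

/-- The bound variables of a formula. -/
def PFml.bv : PFml → Finset ℕ
  | bot => ∅
  | atom _ _ => ∅
  | and φ ψ => φ.bv ∪ ψ.bv
  | or φ ψ => φ.bv ∪ ψ.bv
  | imp φ ψ => φ.bv ∪ ψ.bv
  | all x φ => insert x φ.bv
  | ex x φ => insert x φ.bv

/-- A formula is closed if it has no free variables. -/
def PFml.Closed (φ : PFml) : Prop := φ.fv = ∅

/-- Simultaneous substitution of terms for variables in a term. -/
def PTerm.msub (s : ℕ → PTerm) : PTerm → PTerm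
  | var v => s v
  | const c => const c

/-- Simultaneous (naive, i.e. non-capture-avoiding) substitution of terms for the free
occurrences of variables in a formula. -/
def PFml.msub (s : ℕ → PTerm) : PFml → PFml
  | bot => bot
  | atom i args => atom i (args.map (PTerm.msub s))
  | and φ ψ => (φ.msub s).and (ψ.msub s)
  | or φ ψ => (φ.msub s).or (ψ.msub s)
  | imp φ ψ => (φ.msub s).imp (ψ.msub s)
  | all x φ => all x (φ.msub fun v => if v = x then .var x else s v)
  | ex x φ => ex x (φ.msub fun v => if v = x then .var x else s v)

/-- The substitution replacing the single variable `x` by the term `t`. -/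
def sub1 (x : ℕ) (t : PTerm) : ℕ → PTerm := fun v => if v = x then t else .var v

/-- The simultaneous substitution `s` is free for (admissible in) the formula, i.e. no
variable of a substituted term gets captured by a quantifier. -/
def PFml.FreeForM (s : ℕ → PTerm) : PFml → Prop
  | bot => True
  | atom _ _ => True
  | and φ ψ => φ.FreeForM s ∧ ψ.FreeForM s
  | or φ ψ => φ.FreeForM s ∧ ψ.FreeForM s
  | imp φ ψ => φ.FreeForM s ∧ ψ.FreeForM s
  | all x φ => (∀ v ∈ φ.fv, v ≠ x → x ∉ (s v).fv) ∧
      φ.FreeForM (fun v => if v = x then .var x else s v)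
  | ex x φ => (∀ v ∈ φ.fv, v ≠ x → x ∉ (s v).fv) ∧
      φ.FreeForM (fun v => if v = x then .var x else s v)

/-! ### Interpretations and realizability -/

/-- An `n`-ary generalized predicate. -/
def GenPred (n : ℕ) : Type := (Fin n → ℕ) → Set ℕ

/-- An interpretation assigns to each predicate variable `Pⁿᵢ` an `n`-ary generalized
predicate. -/
def Interp : Type := (n : ℕ) → ℕ → GenPred n

/-- The realizability relation `e rᶠ Φ` (relative to a valuation `ρ` of the individual
variables). -/
def Realizes (f : Interp) : (ℕ → ℕ) → ℕ → PFml → Prop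
  | _, _, .bot => False
  | ρ, e, .atom i args => e ∈ f args.length i (fun j => (args.get j).eval ρ)
  | ρ, e, .and φ ψ => Realizes f ρ (pexp 0 e) φ ∧ Realizes f ρ (pexp 1 e) ψ
  | ρ, e, .or φ ψ => (pexp 0 e = 0 ∧ Realizes f ρ (pexp 1 e) φ) ∨
      (pexp 0 e = 1 ∧ Realizes f ρ (pexp 1 e) ψ)
  | ρ, e, .imp φ ψ => ∀ a, Realizes f ρ a φ → ∃ b ∈ K e a, Realizes f ρ b ψ
  | ρ, e, .all x φ => ∀ a, ∃ b ∈ K e a, Realizes f (Function.update ρ x a) b φ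
  | ρ, e, .ex x φ => Realizes f (Function.update ρ x (pexp 0 e)) (pexp 1 e) φ

/-- The zero valuation, used for closed formulas. -/
def rho0 : ℕ → ℕ := fun _ => 0

/-- The closed formula `Φ` is realizable in the interpretation `f`. -/
def FRealizable (f : Interp) (φ : PFml) : Prop := ∃ e, Realizes f rho0 e φ

/-- The closed predicate formula `Φ` is (uniformly) absolutely realizable. -/
def AbsRealizable (φ : PFml) : Prop := ∃ e, ∀ f : Interp, Realizes f rho0 e φ


/-! ### The arithmetical fragment: `Z,E,S,A,M` are the predicate variables
`P¹₀, P²₀, P²₁, P³₀, P³₁`. -/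

/-- `Z(t)`, i.e. the atomic formula `P¹₀(t)`. -/
def vZ (t : PTerm) : PFml := .atom 0 [t]
/-- `E(t,u)`, i.e. `P²₀(t,u)`. -/
def vE (t u : PTerm) : PFml := .atom 0 [t, u]
/-- `S(t,u)`, i.e. `P²₁(t,u)`. -/
def vS (t u : PTerm) : PFml := .atom 1 [t, u]
/-- `A(t,u,w)`, i.e. `P³₀(t,u,w)`. -/
def vA (t u w : PTerm) : PFml := .atom 0 [t, u, w]
/-- `M(t,u,w)`, i.e. `P³₁(t,u,w)`. -/
def vM (t u w : PTerm) : PFml := .atom 1 [t, u, w]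

/-- The standard reading of the arithmetical predicate symbols. -/
def arithStd : (n : ℕ) → ℕ → (Fin n → ℕ) → Prop
  | 1, 0, v => v 0 = 0
  | 2, 0, v => v 0 = v 1
  | 2, 1, v => v 0 + 1 = v 1
  | 3, 0, v => v 0 + v 1 = v 2
  | 3, 1, v => v 0 * v 1 = v 2
  | _, _, _ => False

/-- The standard interpretation: an atomic arithmetical statement is realized by `e`
iff `e = 0` and the statement is true. -/
def stdInterp : Interp := fun n i v => {e | e = 0 ∧ arithStd n i v}

/-- Classical truth of an arithmetical formula in the standard model (atoms of
non-arithmetical predicate variables are read as false). -/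
def TrueStd : (ℕ → ℕ) → PFml → Prop
  | _, .bot => False
  | ρ, .atom i args => arithStd args.length i (fun j => (args.get j).eval ρ)
  | ρ, .and φ ψ => TrueStd ρ φ ∧ TrueStd ρ ψ
  | ρ, .or φ ψ => TrueStd ρ φ ∨ TrueStd ρ ψ
  | ρ, .imp φ ψ => TrueStd ρ φ → TrueStd ρ ψ
  | ρ, .all x φ => ∀ a, TrueStd (Function.update ρ x a) φ
  | ρ, .ex x φ => ∃ a, TrueStd (Function.update ρ x a) φ

/-- The pairs (arity, index) naming the arithmetical predicate symbols `Z,E,S,A,M`. -/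
def arithSlot (n i : ℕ) : Prop := (n = 1 ∧ i = 0) ∨ (n = 2 ∧ i ≤ 1) ∨ (n = 3 ∧ i ≤ 1)

/-- The `Ar`-formula `x ≤ t`, i.e. `∃z A(z,x,t)`. -/
def leF (z x : ℕ) (t : PTerm) : PFml := .ex z (vA (.var z) (.var x) t)

/-- `Δ₀`-formulas of the language `Ar`. -/
inductive IsDelta0 : PFml → Prop
  | bot : IsDelta0 .bot
  | atom {i : ℕ} {args : List PTerm} : arithSlot args.length i → IsDelta0 (.atom i args)
  | and {φ ψ} : IsDelta0 φ → IsDelta0 ψ → IsDelta0 (φ.and ψ)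
  | or {φ ψ} : IsDelta0 φ → IsDelta0 ψ → IsDelta0 (φ.or ψ)
  | imp {φ ψ} : IsDelta0 φ → IsDelta0 ψ → IsDelta0 (φ.imp ψ)
  | ball {x z : ℕ} {t : PTerm} {φ} : x ∉ t.fv → z ∉ t.fv → z ≠ x → IsDelta0 φ →
      IsDelta0 (.all x ((leF z x t).imp φ))
  | bex {x z : ℕ} {t : PTerm} {φ} : x ∉ t.fv → z ∉ t.fv → z ≠ x → IsDelta0 φ →
      IsDelta0 (.ex x ((leF z x t).and φ))

/-- `Σ`-formulas of the language `Ar`. -/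
inductive IsSigma : PFml → Prop
  | delta0 {φ} : IsDelta0 φ → IsSigma φ
  | and {φ ψ} : IsSigma φ → IsSigma ψ → IsSigma (φ.and ψ)
  | or {φ ψ} : IsSigma φ → IsSigma ψ → IsSigma (φ.or ψ)
  | ball {x z : ℕ} {t : PTerm} {φ} : x ∉ t.fv → z ∉ t.fv → z ≠ x → IsSigma φ →
      IsSigma (.all x ((leF z x t).imp φ))
  | bex {x z : ℕ} {t : PTerm} {φ} : x ∉ t.fv → z ∉ t.fv → z ≠ x → IsSigma φ →
      IsSigma (.ex x ((leF z x t).and φ))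
  | ex {x : ℕ} {φ} : IsSigma φ → IsSigma (.ex x φ)




/-- Iterated universal quantification. -/
def alls (xs : List ℕ) (φ : PFml) : PFml := xs.foldr PFml.all φ

open PTerm (var const) in
/-- The axioms `A₁ – A₂₅` of the predicate version `IRA*` of intuitionistic Robinson
arithmetic. -/
def IRAstarAxioms : List PFml := [
  alls [0,1,2] (((vS (var 0) (var 2)).and (vS (var 1) (var 2))).imp (vE (var 0) (var 1))),
  alls [0,1] ((vS (var 0) (var 1)).imp (vZ (var 1)).not),
  alls [0,1,2] (((vE (var 0) (var 1)).and (vE (var 0) (var 2))).imp (vE (var 1) (var 2))),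
  alls [0,1,2] (((vE (var 0) (var 1)).and (vS (var 0) (var 2))).imp (vS (var 1) (var 2))),
  alls [0,1] ((vZ (var 1)).imp (vA (var 0) (var 1) (var 0))),
  alls [0,1,2,3,4] ((((vS (var 1) (var 2)).and (vA (var 0) (var 1) (var 3))).and
      (vS (var 3) (var 4))).imp (vA (var 0) (var 2) (var 4))),
  alls [0,1] ((vZ (var 1)).imp (vM (var 0) (var 1) (var 1))),
  alls [0,1,2,3,4] ((((vS (var 1) (var 2)).and (vM (var 0) (var 1) (var 3))).and
      (vA (var 3) (var 0) (var 4))).imp (vM (var 0) (var 2) (var 4))),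
  alls [0,1,2,3] (((vE (var 0) (var 1)).and (vA (var 0) (var 2) (var 3))).imp
      (vA (var 1) (var 2) (var 3))),
  alls [0,1,2,3] (((vE (var 1) (var 2)).and (vA (var 0) (var 1) (var 3))).imp
      (vA (var 0) (var 2) (var 3))),
  alls [0,1,2,3] (((vE (var 0) (var 1)).and (vM (var 0) (var 2) (var 3))).imp
      (vM (var 1) (var 2) (var 3))),
  alls [0,1,2,3] (((vE (var 1) (var 2)).and (vM (var 0) (var 1) (var 3))).imp
      (vM (var 0) (var 2) (var 3))),
  PFml.all 0 ((vZ (var 0)).or (.ex 1 (vS (var 1) (var 0)))),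
  PFml.ex 0 (vZ (var 0)),
  alls [0,1] (((vZ (var 0)).and (vZ (var 1))).imp (vE (var 0) (var 1))),
  alls [0,1] (((vE (var 0) (var 1)).and (vZ (var 0))).imp (vZ (var 1))),
  PFml.all 0 (.ex 1 (vS (var 0) (var 1))),
  alls [0,1,2] (((vS (var 0) (var 1)).and (vS (var 0) (var 2))).imp (vE (var 1) (var 2))),
  alls [0,1,2] (((vS (var 0) (var 1)).and (vE (var 1) (var 2))).imp (vS (var 0) (var 2))),
  alls [0,1] (.ex 2 (vA (var 0) (var 1) (var 2))),
  alls [0,1,2,3] (((vA (var 0) (var 1) (var 2)).and (vA (var 0) (var 1) (var 3))).imp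
      (vE (var 2) (var 3))),
  alls [0,1,2,3] (((vA (var 0) (var 1) (var 2)).and (vE (var 2) (var 3))).imp
      (vA (var 0) (var 1) (var 3))),
  alls [0,1] (.ex 2 (vM (var 0) (var 1) (var 2))),
  alls [0,1,2,3] (((vM (var 0) (var 1) (var 2)).and (vM (var 0) (var 1) (var 3))).imp
      (vE (var 2) (var 3))),
  alls [0,1,2,3] (((vM (var 0) (var 1) (var 2)).and (vE (var 2) (var 3))).imp
      (vM (var 0) (var 1) (var 3)))]

/-- `A₂₆`: functionality of the formula `G`:
`∀x,y,z₁,z₂ (G(x,y,z₁) & G(x,y,z₂) → E(z₁,z₂))`. Here `G = G(x,y,z)` has distinguished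
free variables `0,1,2` playing the role of `x,y,z`. -/
def A26 (G : PFml) : PFml :=
  alls [0,1,2,3] ((G.and (G.msub (sub1 2 (.var 3)))).imp (vE (.var 2) (.var 3)))

/-- `H(y,x)`, i.e. `∃w(Z(w) & G(y,x,w))`, expressing `{y}(x) = 0`; here `y,x` are the
variables `1,0` and `w` is the fresh variable `5`. -/
def Hfml (G : PFml) : PFml :=
  .ex 5 ((vZ (.var 5)).and (G.msub fun v =>
    if v = 0 then .var 1 else if v = 1 then .var 0 else if v = 2 then .var 5 else .var v))

/-- `B(v,x)` with `v,x` the variables `4,0`; here `B = B(v,x)` has distinguished free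
variables `0,1` playing the role of `v,x`. -/
def B40 (B : PFml) : PFml :=
  B.msub fun v => if v = 0 then .var 4 else if v = 1 then .var 0 else .var v

/-- `A₂₇`: `∀y,z ¬¬∃v ∀x (x ≤ z → (B(v,x) ↔ H(y,x)))`. -/
def A27 (G B : PFml) : PFml :=
  alls [1,2] (PFml.not (PFml.not (.ex 4 (.all 0
    ((leF 6 0 (.var 2)).imp ((B40 B).iff (Hfml G)))))))

/-- `A₂₈`: `∀x,y (B(x,y) ∨ ¬B(x,y))`. -/
def A28 (B : PFml) : PFml := alls [0,1] (B.or B.not)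

/-- `Q`: the conjunction of the formulas `A₁ – A₂₈`. -/
def Qfml (G B : PFml) : PFml := bigAnd (IRAstarAxioms ++ [A26 G, A27 G B, A28 B])

/-- The formula `[n](t)`: `[0](t) = Z(t)`, `[n+1](t) = ∃xₙ([n](xₙ) & S(xₙ,t))`. -/
def numFt : ℕ → PTerm → PFml
  | 0, t => vZ t
  | n + 1, t => .ex n ((numFt n (.var n)).and (vS (.var n) t))



/-- The axiom of equality for the predicate variable `Pⁿᵢ`:
`∀x⃗ ∀y⃗ (E(x₁,y₁) & … & E(xₙ,yₙ) → (P(x⃗) → P(y⃗)))`. -/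
def eqAx (n i : ℕ) : PFml :=
  alls ((List.range n) ++ (List.range n).map (· + n))
    ((bigAnd ((List.range n).map fun j => vE (.var j) (.var (n + j)))).imp
      ((PFml.atom i ((List.range n).map PTerm.var)).imp
        (PFml.atom i ((List.range n).map fun j => PTerm.var (n + j)))))




/-- Schemes over the arithmetical language: formulas of the language `LS*`, whose
atoms are either arithmetical atoms built from the predicate symbols `Z,E,S,A,M` of
`Ar`, or atoms built from the predicate variables `Pⁿᵢ`. -/
inductive Scheme : Type
  | bot
  | sZ (t : PTerm)
  | sE (t u : PTerm)
  | sS (t u : PTerm)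
  | sA (t u w : PTerm)
  | sM (t u w : PTerm)
  | patom (i : ℕ) (args : List PTerm)
  | and (φ ψ : Scheme)
  | or (φ ψ : Scheme)
  | imp (φ ψ : Scheme)
  | all (x : ℕ) (φ : Scheme)
  | ex (x : ℕ) (φ : Scheme)

def Scheme.not (φ : Scheme) : Scheme := φ.imp .bot
def Scheme.iff (φ ψ : Scheme) : Scheme := (φ.imp ψ).and (ψ.imp φ)

def Scheme.fv : Scheme → Finset ℕ
  | bot => ∅
  | sZ t => t.fv
  | sE t u => t.fv ∪ u.fv
  | sS t u => t.fv ∪ u.fv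
  | sA t u w => t.fv ∪ u.fv ∪ w.fv
  | sM t u w => t.fv ∪ u.fv ∪ w.fv
  | patom _ args => args.foldr (fun t s => t.fv ∪ s) ∅
  | and φ ψ => φ.fv ∪ ψ.fv
  | or φ ψ => φ.fv ∪ ψ.fv
  | imp φ ψ => φ.fv ∪ ψ.fv
  | all x φ => φ.fv.erase x
  | ex x φ => φ.fv.erase x

/-- All individual variables occurring in a scheme (free or bound). -/
def Scheme.vars : Scheme → Finset ℕ
  | bot => ∅
  | sZ t => t.fv
  | sE t u => t.fv ∪ u.fv
  | sS t u => t.fv ∪ u.fv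
  | sA t u w => t.fv ∪ u.fv ∪ w.fv
  | sM t u w => t.fv ∪ u.fv ∪ w.fv
  | patom _ args => args.foldr (fun t s => t.fv ∪ s) ∅
  | and φ ψ => φ.vars ∪ ψ.vars
  | or φ ψ => φ.vars ∪ ψ.vars
  | imp φ ψ => φ.vars ∪ ψ.vars
  | all x φ => insert x φ.vars
  | ex x φ => insert x φ.vars

def Scheme.bv : Scheme → Finset ℕ
  | and φ ψ => φ.bv ∪ ψ.bv
  | or φ ψ => φ.bv ∪ ψ.bv
  | imp φ ψ => φ.bv ∪ ψ.bv
  | all x φ => insert x φ.bv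
  | ex x φ => insert x φ.bv
  | _ => ∅

def Scheme.Closed (φ : Scheme) : Prop := φ.fv = ∅

/-- The predicate variables (arity, index) occurring in a scheme. -/
def Scheme.pvars : Scheme → Finset (ℕ × ℕ)
  | patom i args => {(args.length, i)}
  | and φ ψ => φ.pvars ∪ ψ.pvars
  | or φ ψ => φ.pvars ∪ ψ.pvars
  | imp φ ψ => φ.pvars ∪ ψ.pvars
  | all _ φ => φ.pvars
  | ex _ φ => φ.pvars
  | _ => ∅

def Scheme.msub (s : ℕ → PTerm) : Scheme → Scheme
  | bot => bot
  | sZ t => sZ (t.msub s)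
  | sE t u => sE (t.msub s) (u.msub s)
  | sS t u => sS (t.msub s) (u.msub s)
  | sA t u w => sA (t.msub s) (u.msub s) (w.msub s)
  | sM t u w => sM (t.msub s) (u.msub s) (w.msub s)
  | patom i args => patom i (args.map (PTerm.msub s))
  | and φ ψ => (φ.msub s).and (ψ.msub s)
  | or φ ψ => (φ.msub s).or (ψ.msub s)
  | imp φ ψ => (φ.msub s).imp (ψ.msub s)
  | all x φ => all x (φ.msub fun v => if v = x then .var x else s v)
  | ex x φ => ex x (φ.msub fun v => if v = x then .var x else s v)

def Scheme.FreeForM (s : ℕ → PTerm) : Scheme → Prop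
  | and φ ψ => φ.FreeForM s ∧ ψ.FreeForM s
  | or φ ψ => φ.FreeForM s ∧ ψ.FreeForM s
  | imp φ ψ => φ.FreeForM s ∧ ψ.FreeForM s
  | all x φ => (∀ v ∈ φ.fv, v ≠ x → x ∉ (s v).fv) ∧
      φ.FreeForM (fun v => if v = x then .var x else s v)
  | ex x φ => (∀ v ∈ φ.fv, v ≠ x → x ∉ (s v).fv) ∧
      φ.FreeForM (fun v => if v = x then .var x else s v)
  | _ => True

/-- Realizability of schemes: arithmetical atoms are realized by `e` iff `e = 0` and the
atom is true in the standard model; atoms of predicate variables are interpreted by `f`. -/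
def SReal (f : Interp) : (ℕ → ℕ) → ℕ → Scheme → Prop
  | _, _, .bot => False
  | ρ, e, .sZ t => e = 0 ∧ t.eval ρ = 0
  | ρ, e, .sE t u => e = 0 ∧ t.eval ρ = u.eval ρ
  | ρ, e, .sS t u => e = 0 ∧ t.eval ρ + 1 = u.eval ρ
  | ρ, e, .sA t u w => e = 0 ∧ t.eval ρ + u.eval ρ = w.eval ρ
  | ρ, e, .sM t u w => e = 0 ∧ t.eval ρ * u.eval ρ = w.eval ρ
  | ρ, e, .patom i args => e ∈ f args.length i (fun j => (args.get j).eval ρ)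
  | ρ, e, .and φ ψ => SReal f ρ (pexp 0 e) φ ∧ SReal f ρ (pexp 1 e) ψ
  | ρ, e, .or φ ψ => (pexp 0 e = 0 ∧ SReal f ρ (pexp 1 e) φ) ∨
      (pexp 0 e = 1 ∧ SReal f ρ (pexp 1 e) ψ)
  | ρ, e, .imp φ ψ => ∀ a, SReal f ρ a φ → ∃ b ∈ K e a, SReal f ρ b ψ
  | ρ, e, .all x φ => ∀ a, ∃ b ∈ K e a, SReal f (Function.update ρ x a) b φ
  | ρ, e, .ex x φ => SReal f (Function.update ρ x (pexp 0 e)) (pexp 1 e) φ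

/-- A closed scheme is uniformly absolutely realizable if a single `e` realizes it in
every interpretation. -/
def AbsRealizableS (φ : Scheme) : Prop := ∃ e, ∀ f : Interp, SReal f rho0 e φ

/-- Classical truth of a scheme with no predicate variables (arithmetical formula)
in the standard model. -/
def STrue : (ℕ → ℕ) → Scheme → Prop
  | _, .bot => False
  | ρ, .sZ t => t.eval ρ = 0
  | ρ, .sE t u => t.eval ρ = u.eval ρ
  | ρ, .sS t u => t.eval ρ + 1 = u.eval ρ
  | ρ, .sA t u w => t.eval ρ + u.eval ρ = w.eval ρ
  | ρ, .sM t u w => t.eval ρ * u.eval ρ = w.eval ρ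
  | _, .patom _ _ => False
  | ρ, .and φ ψ => STrue ρ φ ∧ STrue ρ ψ
  | ρ, .or φ ψ => STrue ρ φ ∨ STrue ρ ψ
  | ρ, .imp φ ψ => STrue ρ φ → STrue ρ ψ
  | ρ, .all x φ => ∀ a, STrue (Function.update ρ x a) φ
  | ρ, .ex x φ => ∃ a, STrue (Function.update ρ x a) φ

/-- `x ≤ t` in the scheme language: `∃z A(z,x,t)`. -/
def leS (z x : ℕ) (t : PTerm) : Scheme := .ex z (.sA (.var z) (.var x) t)

/-- `Δ₀`-formulas of `Ar` (as schemes). -/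
inductive IsDelta0S : Scheme → Prop
  | bot : IsDelta0S .bot
  | sZ (t) : IsDelta0S (.sZ t)
  | sE (t u) : IsDelta0S (.sE t u)
  | sS (t u) : IsDelta0S (.sS t u)
  | sA (t u w) : IsDelta0S (.sA t u w)
  | sM (t u w) : IsDelta0S (.sM t u w)
  | and {φ ψ} : IsDelta0S φ → IsDelta0S ψ → IsDelta0S (φ.and ψ)
  | or {φ ψ} : IsDelta0S φ → IsDelta0S ψ → IsDelta0S (φ.or ψ)
  | imp {φ ψ} : IsDelta0S φ → IsDelta0S ψ → IsDelta0S (φ.imp ψ)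
  | ball {x z : ℕ} {t : PTerm} {φ} : x ∉ t.fv → z ∉ t.fv → z ≠ x → IsDelta0S φ →
      IsDelta0S (.all x ((leS z x t).imp φ))
  | bex {x z : ℕ} {t : PTerm} {φ} : x ∉ t.fv → z ∉ t.fv → z ≠ x → IsDelta0S φ →
      IsDelta0S (.ex x ((leS z x t).and φ))

/-- `Σ`-formulas of `Ar` (as schemes). -/
inductive IsSigmaS : Scheme → Prop
  | delta0 {φ} : IsDelta0S φ → IsSigmaS φ
  | and {φ ψ} : IsSigmaS φ → IsSigmaS ψ → IsSigmaS (φ.and ψ)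
  | or {φ ψ} : IsSigmaS φ → IsSigmaS ψ → IsSigmaS (φ.or ψ)
  | ball {x z : ℕ} {t : PTerm} {φ} : x ∉ t.fv → z ∉ t.fv → z ≠ x → IsSigmaS φ →
      IsSigmaS (.all x ((leS z x t).imp φ))
  | bex {x z : ℕ} {t : PTerm} {φ} : x ∉ t.fv → z ∉ t.fv → z ≠ x → IsSigmaS φ →
      IsSigmaS (.ex x ((leS z x t).and φ))
  | ex {x : ℕ} {φ} : IsSigmaS φ → IsSigmaS (.ex x φ)

/-- `Φ[c]`: replace each atom `Pⁿᵢ(t₁,…,tₙ)` of a predicate variable by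
`Pⁿ⁺¹ᵢ(c,t₁,…,tₙ)` (arithmetical atoms are unchanged). -/
def Scheme.bracketC (c : ℕ) : Scheme → Scheme
  | patom i args => patom i (.const c :: args)
  | and φ ψ => (φ.bracketC c).and (ψ.bracketC c)
  | or φ ψ => (φ.bracketC c).or (ψ.bracketC c)
  | imp φ ψ => (φ.bracketC c).imp (ψ.bracketC c)
  | all x φ => all x (φ.bracketC c)
  | ex x φ => ex x (φ.bracketC c)
  | φ => φ

/-- `Φ[z]` for a variable `z`: replace each atom `Pⁿᵢ(t₁,…,tₙ)` of a predicate variable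
by `Pⁿ⁺¹ᵢ(z,t₁,…,tₙ)`. -/
def Scheme.bracketV (z : ℕ) : Scheme → Scheme
  | patom i args => patom i (.var z :: args)
  | and φ ψ => (φ.bracketV z).and (ψ.bracketV z)
  | or φ ψ => (φ.bracketV z).or (ψ.bracketV z)
  | imp φ ψ => (φ.bracketV z).imp (ψ.bracketV z)
  | all x φ => all x (φ.bracketV z)
  | ex x φ => ex x (φ.bracketV z)
  | φ => φ

/-- The interpretation `f_c`: `f_c(Pⁿᵢ)(k₁,…,kₙ) = f(Pⁿ⁺¹ᵢ)(c,k₁,…,kₙ)`. -/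
def interpCons (c : ℕ) (f : Interp) : Interp := fun n i v => f (n + 1) i (Fin.cons c v)

/-- Does the predicate variable `Pⁿᵢ` occur in the scheme? -/
def Scheme.occursP (n i : ℕ) : Scheme → Prop
  | patom j args => j = i ∧ args.length = n
  | and φ ψ => φ.occursP n i ∨ ψ.occursP n i
  | or φ ψ => φ.occursP n i ∨ ψ.occursP n i
  | imp φ ψ => φ.occursP n i ∨ ψ.occursP n i
  | all _ φ => φ.occursP n i
  | ex _ φ => φ.occursP n i
  | _ => False

/-- The substitution of the terms `args` for the distinguished variables `x₁,…,xₙ`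
(named `0,…,n-1`). -/
def argSub (args : List PTerm) : ℕ → PTerm :=
  fun v => if h : v < args.length then args.get ⟨v, h⟩ else .var v

/-- Substitution of schemes for predicate variables: each atom `Pⁿᵢ(t₁,…,tₙ)` is
replaced by the result of simultaneously substituting `t₁,…,tₙ` for the distinguished
variables `0,…,n-1` of the scheme `σ n i`. -/
def Scheme.substP (σ : ℕ → ℕ → Scheme) : Scheme → Scheme
  | patom i args => (σ args.length i).msub (argSub args)
  | and φ ψ => (φ.substP σ).and (ψ.substP σ)
  | or φ ψ => (φ.substP σ).or (ψ.substP σ)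
  | imp φ ψ => (φ.substP σ).imp (ψ.substP σ)
  | all x φ => all x (φ.substP σ)
  | ex x φ => ex x (φ.substP σ)
  | φ => φ

/-- The list of schemes `σ` is acceptable for substitution in the given scheme:
(1) at every atom of a predicate variable the substitution of the argument terms
for the distinguished variables is capture-free, and (2) no atom of a predicate
variable lies in the scope of a quantifier binding a "superfluous" parameter of the
scheme substituted for that variable. -/
def Scheme.Acceptable (σ : ℕ → ℕ → Scheme) : Scheme → Prop
  | patom i args => (σ args.length i).FreeForM (argSub args)
  | and φ ψ => φ.Acceptable σ ∧ ψ.Acceptable σ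
  | or φ ψ => φ.Acceptable σ ∧ ψ.Acceptable σ
  | imp φ ψ => φ.Acceptable σ ∧ ψ.Acceptable σ
  | all x φ => (∀ n i, φ.occursP n i → x ∉ (σ n i).fv \ Finset.range n) ∧ φ.Acceptable σ
  | ex x φ => (∀ n i, φ.occursP n i → x ∉ (σ n i).fv \ Finset.range n) ∧ φ.Acceptable σ
  | _ => True

/-- The universal closure of a scheme. -/
def Scheme.univClosure (φ : Scheme) : Scheme :=
  (φ.fv.sort (· ≤ ·)).foldr Scheme.all φ




/-- Natural deduction for the intuitionistic predicate calculus `IQC` in the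
language `L*`. -/
inductive IQC : List PFml → PFml → Prop
  | hyp {Γ : List PFml} {φ : PFml} : φ ∈ Γ → IQC Γ φ
  | botE {Γ φ} : IQC Γ .bot → IQC Γ φ
  | andI {Γ : List PFml} {φ ψ : PFml} : IQC Γ φ → IQC Γ ψ → IQC Γ (φ.and ψ)
  | andE1 {Γ : List PFml} {φ ψ : PFml} : IQC Γ (φ.and ψ) → IQC Γ φ
  | andE2 {Γ : List PFml} {φ ψ : PFml} : IQC Γ (φ.and ψ) → IQC Γ ψ
  | orI1 {Γ : List PFml} {φ ψ : PFml} : IQC Γ φ → IQC Γ (φ.or ψ)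
  | orI2 {Γ : List PFml} {φ ψ : PFml} : IQC Γ ψ → IQC Γ (φ.or ψ)
  | orE {Γ φ ψ χ} : IQC Γ (φ.or ψ) → IQC (φ :: Γ) χ → IQC (ψ :: Γ) χ → IQC Γ χ
  | impI {Γ : List PFml} {φ ψ : PFml} : IQC (φ :: Γ) ψ → IQC Γ (φ.imp ψ)
  | impE {Γ : List PFml} {φ ψ : PFml} : IQC Γ (φ.imp ψ) → IQC Γ φ → IQC Γ ψ
  | allI {Γ x φ} : IQC Γ φ → (∀ ψ ∈ Γ, x ∉ ψ.fv) → IQC Γ (.all x φ)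
  | allE {Γ x φ} (t : PTerm) : IQC Γ (.all x φ) → φ.FreeForM (sub1 x t) →
      IQC Γ (φ.msub (sub1 x t))
  | exI {Γ x φ} (t : PTerm) : IQC Γ (φ.msub (sub1 x t)) → φ.FreeForM (sub1 x t) →
      IQC Γ (.ex x φ)
  | exE {Γ x φ χ} : IQC Γ (.ex x φ) → IQC (φ :: Γ) χ → x ∉ χ.fv →
      (∀ ψ ∈ Γ, x ∉ ψ.fv) → IQC Γ χ

/-- `Pⁿᵢ` occurs in the formula. -/
def PFml.occursP (n i : ℕ) : PFml → Prop
  | .atom j args => j = i ∧ args.length = n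
  | .and φ ψ => φ.occursP n i ∨ ψ.occursP n i
  | .or φ ψ => φ.occursP n i ∨ ψ.occursP n i
  | .imp φ ψ => φ.occursP n i ∨ ψ.occursP n i
  | .all _ φ => φ.occursP n i
  | .ex _ φ => φ.occursP n i
  | _ => False



/-- Substitution of formulas for predicate variables. -/
def PFml.substP (σ : ℕ → ℕ → PFml) : PFml → PFml
  | .atom i args => (σ args.length i).msub (argSub args)
  | .and φ ψ => (φ.substP σ).and (ψ.substP σ)
  | .or φ ψ => (φ.substP σ).or (ψ.substP σ)
  | .imp φ ψ => (φ.substP σ).imp (ψ.substP σ)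
  | .all x φ => .all x (φ.substP σ)
  | .ex x φ => .ex x (φ.substP σ)
  | .bot => .bot

def PFml.AcceptableP (σ : ℕ → ℕ → PFml) : PFml → Prop
  | .atom i args => (σ args.length i).FreeForM (argSub args)
  | .and φ ψ => φ.AcceptableP σ ∧ ψ.AcceptableP σ
  | .or φ ψ => φ.AcceptableP σ ∧ ψ.AcceptableP σ
  | .imp φ ψ => φ.AcceptableP σ ∧ ψ.AcceptableP σ
  | .all x φ => (∀ n i, φ.occursP n i → x ∉ (σ n i).fv \ Finset.range n) ∧ φ.AcceptableP σ
  | .ex x φ => (∀ n i, φ.occursP n i → x ∉ (σ n i).fv \ Finset.range n) ∧ φ.AcceptableP σ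
  | .bot => True

/-- `φ` is a substitutional instance of the predicate formula `base`. -/
def IsInstance (base φ : PFml) : Prop :=
  ∃ σ : ℕ → ℕ → PFml, base.AcceptableP σ ∧ φ = base.substP σ



inductive LATerm : Type
  | var (v : ℕ)
  | zero
  | succ (t : LATerm)
  | add (t u : LATerm)
  | mul (t u : LATerm)

def LATerm.eval (ρ : ℕ → ℕ) : LATerm → ℕ
  | var v => ρ v
  | zero => 0
  | succ t => t.eval ρ + 1
  | add t u => t.eval ρ + u.eval ρ
  | mul t u => t.eval ρ * u.eval ρ

def LATerm.fv : LATerm → Finset ℕ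
  | var v => {v}
  | zero => ∅
  | succ t => t.fv
  | add t u => t.fv ∪ u.fv
  | mul t u => t.fv ∪ u.fv

def LATerm.msub (s : ℕ → LATerm) : LATerm → LATerm
  | var v => s v
  | zero => zero
  | succ t => succ (t.msub s)
  | add t u => add (t.msub s) (u.msub s)
  | mul t u => mul (t.msub s) (u.msub s)

/-- The numeral for `n`. -/
def numeral : ℕ → LATerm
  | 0 => .zero
  | n + 1 => .succ (numeral n)

inductive LAFml : Type
  | eq (t u : LATerm)
  | and (φ ψ : LAFml)
  | or (φ ψ : LAFml)
  | imp (φ ψ : LAFml)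
  | not (φ : LAFml)
  | all (x : ℕ) (φ : LAFml)
  | ex (x : ℕ) (φ : LAFml)

def LAFml.fv : LAFml → Finset ℕ
  | eq t u => t.fv ∪ u.fv
  | and φ ψ => φ.fv ∪ ψ.fv
  | or φ ψ => φ.fv ∪ ψ.fv
  | imp φ ψ => φ.fv ∪ ψ.fv
  | not φ => φ.fv
  | all x φ => φ.fv.erase x
  | ex x φ => φ.fv.erase x

def LAFml.msub (s : ℕ → LATerm) : LAFml → LAFml
  | eq t u => eq (t.msub s) (u.msub s)
  | and φ ψ => (φ.msub s).and (ψ.msub s)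
  | or φ ψ => (φ.msub s).or (ψ.msub s)
  | imp φ ψ => (φ.msub s).imp (ψ.msub s)
  | not φ => (φ.msub s).not
  | all x φ => all x (φ.msub fun v => if v = x then .var x else s v)
  | ex x φ => ex x (φ.msub fun v => if v = x then .var x else s v)

def sub1LA (x : ℕ) (t : LATerm) : ℕ → LATerm := fun v => if v = x then t else .var v

def LAFml.FreeForM (s : ℕ → LATerm) : LAFml → Prop
  | and φ ψ => φ.FreeForM s ∧ ψ.FreeForM s
  | or φ ψ => φ.FreeForM s ∧ ψ.FreeForM s
  | imp φ ψ => φ.FreeForM s ∧ ψ.FreeForM s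
  | not φ => φ.FreeForM s
  | all x φ => (∀ v ∈ φ.fv, v ≠ x → x ∉ (s v).fv) ∧
      φ.FreeForM (fun v => if v = x then .var x else s v)
  | ex x φ => (∀ v ∈ φ.fv, v ≠ x → x ∉ (s v).fv) ∧
      φ.FreeForM (fun v => if v = x then .var x else s v)
  | _ => True

/-- Classical truth of an `LA`-formula in the standard model. -/
def LATrue : (ℕ → ℕ) → LAFml → Prop
  | ρ, .eq t u => t.eval ρ = u.eval ρ
  | ρ, .and φ ψ => LATrue ρ φ ∧ LATrue ρ ψ
  | ρ, .or φ ψ => LATrue ρ φ ∨ LATrue ρ ψ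
  | ρ, .imp φ ψ => LATrue ρ φ → LATrue ρ ψ
  | ρ, .not φ => ¬ LATrue ρ φ
  | ρ, .all x φ => ∀ a, LATrue (Function.update ρ x a) φ
  | ρ, .ex x φ => ∃ a, LATrue (Function.update ρ x a) φ


/-- Kleene's recursive realizability for `LA`-formulas. -/
def LAReal : (ℕ → ℕ) → ℕ → LAFml → Prop
  | ρ, e, .eq t u => e = 0 ∧ t.eval ρ = u.eval ρ
  | ρ, e, .and φ ψ => LAReal ρ (pexp 0 e) φ ∧ LAReal ρ (pexp 1 e) ψ
  | ρ, e, .or φ ψ => (pexp 0 e = 0 ∧ LAReal ρ (pexp 1 e) φ) ∨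
      (pexp 0 e = 1 ∧ LAReal ρ (pexp 1 e) ψ)
  | ρ, e, .imp φ ψ => ∀ a, LAReal ρ a φ → ∃ b ∈ K e a, LAReal ρ b ψ
  | ρ, _, .not φ => ∀ a, ¬ LAReal ρ a φ
  | ρ, e, .all x φ => ∀ a, ∃ b ∈ K e a, LAReal (Function.update ρ x a) b φ
  | ρ, e, .ex x φ => LAReal (Function.update ρ x (pexp 0 e)) (pexp 1 e) φ

/-- `t₁ ≤ t₂` in `LA`: `∃v (t₁ + v = t₂)`. -/
def leLA (x v : ℕ) (t : LATerm) : LAFml := .ex v (.eq (.add (.var x) (.var v)) t)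

inductive IsDelta0LA : LAFml → Prop
  | eq (t u) : IsDelta0LA (.eq t u)
  | and {φ ψ} : IsDelta0LA φ → IsDelta0LA ψ → IsDelta0LA (φ.and ψ)
  | or {φ ψ} : IsDelta0LA φ → IsDelta0LA ψ → IsDelta0LA (φ.or ψ)
  | imp {φ ψ} : IsDelta0LA φ → IsDelta0LA ψ → IsDelta0LA (φ.imp ψ)
  | not {φ} : IsDelta0LA φ → IsDelta0LA φ.not
  | ball {x v : ℕ} {t : LATerm} {φ} : x ∉ t.fv → v ∉ t.fv → v ≠ x → IsDelta0LA φ →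
      IsDelta0LA (.all x ((leLA x v t).imp φ))
  | bex {x v : ℕ} {t : LATerm} {φ} : x ∉ t.fv → v ∉ t.fv → v ≠ x → IsDelta0LA φ →
      IsDelta0LA (.ex x ((leLA x v t).and φ))

inductive IsSigmaLA : LAFml → Prop
  | delta0 {φ} : IsDelta0LA φ → IsSigmaLA φ
  | and {φ ψ} : IsSigmaLA φ → IsSigmaLA ψ → IsSigmaLA (φ.and ψ)
  | or {φ ψ} : IsSigmaLA φ → IsSigmaLA ψ → IsSigmaLA (φ.or ψ)
  | ball {x v : ℕ} {t : LATerm} {φ} : x ∉ t.fv → v ∉ t.fv → v ≠ x → IsSigmaLA φ →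
      IsSigmaLA (.all x ((leLA x v t).imp φ))
  | bex {x v : ℕ} {t : LATerm} {φ} : x ∉ t.fv → v ∉ t.fv → v ≠ x → IsSigmaLA φ →
      IsSigmaLA (.ex x ((leLA x v t).and φ))
  | ex {x : ℕ} {φ} : IsSigmaLA φ → IsSigmaLA (.ex x φ)

/-- Natural deduction over `LA` from a set `Ax` of non-logical axioms
(intuitionistic logic). -/
inductive LD (Ax : LAFml → Prop) : List LAFml → LAFml → Prop
  | ax {Γ φ} : Ax φ → LD Ax Γ φ
  | hyp {Γ φ} : φ ∈ Γ → LD Ax Γ φ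
  | andI {Γ : List LAFml} {φ ψ : LAFml} : LD Ax Γ φ → LD Ax Γ ψ → LD Ax Γ (φ.and ψ)
  | andE1 {Γ : List LAFml} {φ ψ : LAFml} : LD Ax Γ (φ.and ψ) → LD Ax Γ φ
  | andE2 {Γ : List LAFml} {φ ψ : LAFml} : LD Ax Γ (φ.and ψ) → LD Ax Γ ψ
  | orI1 {Γ : List LAFml} {φ ψ : LAFml} : LD Ax Γ φ → LD Ax Γ (φ.or ψ)
  | orI2 {Γ : List LAFml} {φ ψ : LAFml} : LD Ax Γ ψ → LD Ax Γ (φ.or ψ)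
  | orE {Γ φ ψ χ} : LD Ax Γ (φ.or ψ) → LD Ax (φ :: Γ) χ → LD Ax (ψ :: Γ) χ → LD Ax Γ χ
  | impI {Γ : List LAFml} {φ ψ : LAFml} : LD Ax (φ :: Γ) ψ → LD Ax Γ (φ.imp ψ)
  | impE {Γ : List LAFml} {φ ψ : LAFml} : LD Ax Γ (φ.imp ψ) → LD Ax Γ φ → LD Ax Γ ψ
  | notI {Γ : List LAFml} {φ ψ : LAFml} : LD Ax (φ :: Γ) ψ → LD Ax (φ :: Γ) ψ.not → LD Ax Γ φ.not
  | notE {Γ : List LAFml} {φ ψ : LAFml} : LD Ax Γ φ → LD Ax Γ φ.not → LD Ax Γ ψ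
  | allI {Γ x φ} : LD Ax Γ φ → (∀ ψ ∈ Γ, x ∉ ψ.fv) → LD Ax Γ (.all x φ)
  | allE {Γ x φ} (t : LATerm) : LD Ax Γ (.all x φ) → φ.FreeForM (sub1LA x t) →
      LD Ax Γ (φ.msub (sub1LA x t))
  | exI {Γ x φ} (t : LATerm) : LD Ax Γ (φ.msub (sub1LA x t)) → φ.FreeForM (sub1LA x t) →
      LD Ax Γ (.ex x φ)
  | exE {Γ x φ χ} : LD Ax Γ (.ex x φ) → LD Ax (φ :: Γ) χ → x ∉ χ.fv →
      (∀ ψ ∈ Γ, x ∉ ψ.fv) → LD Ax Γ χ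

open LATerm (var) in
/-- The axioms of equality and the Peano axioms for successor, sum and product
(without induction). -/
def baseAxioms : List LAFml := [
  .all 0 (.eq (var 0) (var 0)),
  .all 0 (.all 1 (.all 2 ((LAFml.eq (var 0) (var 1)).imp
    ((LAFml.eq (var 0) (var 2)).imp (.eq (var 1) (var 2)))))),
  .all 0 (.all 1 ((LAFml.eq (var 0) (var 1)).imp (.eq (.succ (var 0)) (.succ (var 1))))),
  .all 0 (.all 1 ((LAFml.eq (.succ (var 0)) (.succ (var 1))).imp (.eq (var 0) (var 1)))),
  .all 0 (LAFml.not (.eq (.succ (var 0)) .zero)),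
  .all 0 (.all 1 (.all 2 ((LAFml.eq (var 0) (var 1)).imp
    (.eq (.add (var 0) (var 2)) (.add (var 1) (var 2)))))),
  .all 0 (.all 1 (.all 2 ((LAFml.eq (var 0) (var 1)).imp
    (.eq (.add (var 2) (var 0)) (.add (var 2) (var 1)))))),
  .all 0 (.all 1 (.all 2 ((LAFml.eq (var 0) (var 1)).imp
    (.eq (.mul (var 0) (var 2)) (.mul (var 1) (var 2)))))),
  .all 0 (.all 1 (.all 2 ((LAFml.eq (var 0) (var 1)).imp
    (.eq (.mul (var 2) (var 0)) (.mul (var 2) (var 1)))))),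
  .all 0 (.eq (.add (var 0) .zero) (var 0)),
  .all 0 (.all 1 (.eq (.add (var 0) (.succ (var 1))) (.succ (.add (var 0) (var 1))))),
  .all 0 (.eq (.mul (var 0) .zero) .zero),
  .all 0 (.all 1 (.eq (.mul (var 0) (.succ (var 1)))
    (.add (.mul (var 0) (var 1)) (var 0))))]

/-- The axioms of intuitionistic Robinson arithmetic `IRA`: the Peano axioms with the
induction scheme replaced by `∀x (x = 0 ∨ ∃y (x = sy))`. -/
def IRAax (φ : LAFml) : Prop :=
  φ ∈ baseAxioms ∨
    φ = .all 0 ((LAFml.eq (.var 0) .zero).or (.ex 1 (.eq (.var 0) (.succ (.var 1)))))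

/-- An instance of the induction scheme. -/
def indInst (x : ℕ) (φ : LAFml) : LAFml :=
  ((φ.msub (sub1LA x .zero)).and
    (.all x (φ.imp (φ.msub (sub1LA x (.succ (.var x))))))).imp (.all x φ)

/-- The axioms of Heyting arithmetic `HA`. -/
def HAax (ψ : LAFml) : Prop := ψ ∈ baseAxioms ∨ ∃ x φ, ψ = indInst x φ




/-- Translation of schemes into pure predicate formulas: the arithmetical predicate
symbols `Z,E,S,A,M` become the predicate variables `P¹₀,P²₀,P²₁,P³₀,P³₁`, and the other
predicate variables are renamed injectively so as to avoid these five. -/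
def Scheme.toPFml : Scheme → PFml
  | .bot => .bot
  | .sZ t => vZ t
  | .sE t u => vE t u
  | .sS t u => vS t u
  | .sA t u w => vA t u w
  | .sM t u w => vM t u w
  | .patom i args => .atom (i + 2) args
  | .and φ ψ => φ.toPFml.and ψ.toPFml
  | .or φ ψ => φ.toPFml.or ψ.toPFml
  | .imp φ ψ => φ.toPFml.imp ψ.toPFml
  | .all x φ => .all x φ.toPFml
  | .ex x φ => .ex x φ.toPFml

/-- `Eq(E,P₁,…,Pₘ)`: the conjunction of the axioms of equality for the predicate
variables of the scheme `Φ` (as renamed by `Scheme.toPFml`). -/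
noncomputable def EqFor (Φ : Scheme) : PFml :=
  bigAnd (Φ.pvars.toList.map fun p => eqAx p.1 (p.2 + 2))

/-- `Φ*`: the pure predicate formula
`Q(Z,E,S,A,M) & Eq(E,P₁,…,Pₘ) → Φ(Z,E,S,A,M,P₁,…,Pₘ)` associated with a scheme `Φ`. -/
noncomputable def SchemeStar (G B : PFml) (Φ : Scheme) : PFml :=
  ((Qfml G B).and (EqFor Φ)).imp Φ.toPFml

/-- The Markov principle `M` as a pure predicate formula, with `P` the unary
predicate variable `P¹₁`. -/
def Mfml : PFml :=
  ((PFml.all 0 ((PFml.atom 1 [.var 0]).or (PFml.atom 1 [.var 0]).not)).and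
    (PFml.ex 0 (PFml.atom 1 [.var 0])).not.not).imp (PFml.ex 0 (PFml.atom 1 [.var 0]))

/-- `G(z,x,y)` where `z,x,y` are the variables `2,0,1` and the distinguished variables
`0,1,2` of `G` play the role of `x,y,z` in `G(x,y,z)` (expressing `{x}(y)=z`). -/
def Gzxy (G : PFml) : PFml :=
  G.msub fun v => if v = 0 then .var 2 else if v = 1 then .var 0 else
    if v = 2 then .var 1 else .var v

/-- The scheme `nCT` as a pure predicate formula: `P` is the predicate variable `P¹₁`
and `Q'` is `P²₂`. -/
def nCTfml (G : PFml) : PFml :=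
  (PFml.all 0 ((PFml.atom 1 [.var 0]).not.imp
      (PFml.ex 1 (PFml.atom 2 [.var 0, .var 1])))).imp
    (PFml.ex 2 (PFml.all 0 ((PFml.atom 1 [.var 0]).not.imp
      (PFml.ex 1 ((Gzxy G).and (PFml.atom 2 [.var 0, .var 1]))))))

/-- The pure predicate formula `nCT*`, i.e. `Q & Eq(E,P,Q') → nCT`. -/
def nCTstar (G B : PFml) : PFml :=
  ((Qfml G B).and ((eqAx 1 1).and (eqAx 2 2))).imp (nCTfml G)

/-- The calculus `MQC`: intuitionistic predicate calculus together with all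
substitutional instances of the Markov principle `M` and of the formula `nCT*`
as axioms. -/
inductive MQC (G B : PFml) : List PFml → PFml → Prop
  | axM {Γ : List PFml} {φ : PFml} : IsInstance Mfml φ → MQC G B Γ φ
  | axCT {Γ : List PFml} {φ : PFml} : IsInstance (nCTstar G B) φ → MQC G B Γ φ
  | hyp {Γ : List PFml} {φ : PFml} : φ ∈ Γ → MQC G B Γ φ
  | botE {Γ φ} : MQC G B Γ .bot → MQC G B Γ φ
  | andI {Γ : List PFml} {φ ψ : PFml} : MQC G B Γ φ → MQC G B Γ ψ → MQC G B Γ (φ.and ψ)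
  | andE1 {Γ : List PFml} {φ ψ : PFml} : MQC G B Γ (φ.and ψ) → MQC G B Γ φ
  | andE2 {Γ : List PFml} {φ ψ : PFml} : MQC G B Γ (φ.and ψ) → MQC G B Γ ψ
  | orI1 {Γ : List PFml} {φ ψ : PFml} : MQC G B Γ φ → MQC G B Γ (φ.or ψ)
  | orI2 {Γ : List PFml} {φ ψ : PFml} : MQC G B Γ ψ → MQC G B Γ (φ.or ψ)
  | orE {Γ : List PFml} {φ ψ χ : PFml} : MQC G B Γ (φ.or ψ) → MQC G B (φ :: Γ) χ →
      MQC G B (ψ :: Γ) χ → MQC G B Γ χ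
  | impI {Γ : List PFml} {φ ψ : PFml} : MQC G B (φ :: Γ) ψ → MQC G B Γ (φ.imp ψ)
  | impE {Γ : List PFml} {φ ψ : PFml} : MQC G B Γ (φ.imp ψ) → MQC G B Γ φ → MQC G B Γ ψ
  | allI {Γ x φ} : MQC G B Γ φ → (∀ ψ ∈ Γ, x ∉ ψ.fv) → MQC G B Γ (.all x φ)
  | allE {Γ x φ} (t : PTerm) : MQC G B Γ (.all x φ) → φ.FreeForM (sub1 x t) →
      MQC G B Γ (φ.msub (sub1 x t))
  | exI {Γ x φ} (t : PTerm) : MQC G B Γ (φ.msub (sub1 x t)) → φ.FreeForM (sub1 x t) →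
      MQC G B Γ (.ex x φ)
  | exE {Γ x φ χ} : MQC G B Γ (.ex x φ) → MQC G B (φ :: Γ) χ → x ∉ χ.fv →
      (∀ ψ ∈ Γ, x ∉ ψ.fv) → MQC G B Γ χ

/-- The classical predicate calculus `CQC`: intuitionistic predicate calculus together
with the law of the excluded middle. -/
inductive CQC : List PFml → PFml → Prop
  | em {Γ : List PFml} (φ : PFml) : CQC Γ (φ.or φ.not)
  | hyp {Γ : List PFml} {φ : PFml} : φ ∈ Γ → CQC Γ φ
  | botE {Γ φ} : CQC Γ .bot → CQC Γ φ
  | andI {Γ : List PFml} {φ ψ : PFml} : CQC Γ φ → CQC Γ ψ → CQC Γ (φ.and ψ)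
  | andE1 {Γ : List PFml} {φ ψ : PFml} : CQC Γ (φ.and ψ) → CQC Γ φ
  | andE2 {Γ : List PFml} {φ ψ : PFml} : CQC Γ (φ.and ψ) → CQC Γ ψ
  | orI1 {Γ : List PFml} {φ ψ : PFml} : CQC Γ φ → CQC Γ (φ.or ψ)
  | orI2 {Γ : List PFml} {φ ψ : PFml} : CQC Γ ψ → CQC Γ (φ.or ψ)
  | orE {Γ : List PFml} {φ ψ χ : PFml} : CQC Γ (φ.or ψ) → CQC (φ :: Γ) χ →
      CQC (ψ :: Γ) χ → CQC Γ χ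
  | impI {Γ : List PFml} {φ ψ : PFml} : CQC (φ :: Γ) ψ → CQC Γ (φ.imp ψ)
  | impE {Γ : List PFml} {φ ψ : PFml} : CQC Γ (φ.imp ψ) → CQC Γ φ → CQC Γ ψ
  | allI {Γ x φ} : CQC Γ φ → (∀ ψ ∈ Γ, x ∉ ψ.fv) → CQC Γ (.all x φ)
  | allE {Γ x φ} (t : PTerm) : CQC Γ (.all x φ) → φ.FreeForM (sub1 x t) →
      CQC Γ (φ.msub (sub1 x t))
  | exI {Γ x φ} (t : PTerm) : CQC Γ (φ.msub (sub1 x t)) → φ.FreeForM (sub1 x t) →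
      CQC Γ (.ex x φ)
  | exE {Γ x φ χ} : CQC Γ (.ex x φ) → CQC (φ :: Γ) χ → x ∉ χ.fv →
      (∀ ψ ∈ Γ, x ∉ ψ.fv) → CQC Γ χ

/-- Auxiliary translation for the predicate form: the formula expressing that the
`LA`-term `t` has value `v`; `k` is a supply of fresh variables, and the next unused
fresh variable is returned. -/
def LATerm.pf : LATerm → ℕ → ℕ → PFml × ℕ
  | .var u, v, k => (vE (.var u) (.var v), k)
  | .zero, v, k => (vZ (.var v), k)
  | .succ t, v, k =>
      let r := t.pf k (k + 1)
      (.ex k (r.1.and (vS (.var k) (.var v))), r.2)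
  | .add t u, v, k =>
      let r1 := t.pf k (k + 2)
      let r2 := u.pf (k + 1) r1.2
      (.ex k (.ex (k + 1) (r1.1.and (r2.1.and (vA (.var k) (.var (k + 1)) (.var v))))), r2.2)
  | .mul t u, v, k =>
      let r1 := t.pf k (k + 2)
      let r2 := u.pf (k + 1) r1.2
      (.ex k (.ex (k + 1) (r1.1.and (r2.1.and (vM (.var k) (.var (k + 1)) (.var v))))), r2.2)

/-- Auxiliary translation for the predicate form of an `LA`-formula;
`k` is a supply of fresh variables. -/
def LAFml.pf : LAFml → ℕ → PFml
  | .eq t u, k =>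
      let r1 := t.pf k (k + 2)
      let r2 := u.pf (k + 1) r1.2
      .ex k (.ex (k + 1) (r1.1.and (r2.1.and (vE (.var k) (.var (k + 1))))))
  | .and φ ψ, k => (φ.pf k).and (ψ.pf k)
  | .or φ ψ, k => (φ.pf k).or (ψ.pf k)
  | .imp φ ψ, k => (φ.pf k).imp (ψ.pf k)
  | .not φ, k => (φ.pf k).not
  | .all x φ, k => .all x (φ.pf k)
  | .ex x φ, k => .ex x (φ.pf k)

def LATerm.vmax : LATerm → ℕ
  | .var v => v + 1
  | .zero => 0
  | .succ t => t.vmax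
  | .add t u => max t.vmax u.vmax
  | .mul t u => max t.vmax u.vmax

def LAFml.vmax : LAFml → ℕ
  | .eq t u => max t.vmax u.vmax
  | .and φ ψ => max φ.vmax ψ.vmax
  | .or φ ψ => max φ.vmax ψ.vmax
  | .imp φ ψ => max φ.vmax ψ.vmax
  | .not φ => φ.vmax
  | .all x φ => max (x + 1) φ.vmax
  | .ex x φ => max (x + 1) φ.vmax

/-- The predicate form of an `LA`-formula: the result of eliminating the function
symbols `0, s, +, ·` and replacing `=` by the predicate symbol `E`. -/
def predForm (φ : LAFml) : PFml := φ.pf φ.vmax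

/-- Translation of `L*`-terms into `LA`-terms (constants become numerals). -/
def PTerm.toLA : PTerm → LATerm
  | .var v => .var v
  | .const c => numeral c

/-- Substitution of arithmetical formulas for the predicate variables of a predicate
formula: the atom `Pⁿᵢ(t₁,…,tₙ)` is replaced by the result of substituting `t₁,…,tₙ`
for the distinguished variables `0,…,n-1` of the `LA`-formula `σ n i`. -/
def PFml.toLA (σ : ℕ → ℕ → LAFml) : PFml → LAFml
  | .bot => .eq .zero (.succ .zero)
  | .atom i args => (σ args.length i).msub
      (fun v => if h : v < args.length then (args.get ⟨v, h⟩).toLA else .var v)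
  | .and φ ψ => (φ.toLA σ).and (ψ.toLA σ)
  | .or φ ψ => (φ.toLA σ).or (ψ.toLA σ)
  | .imp φ ψ => (φ.toLA σ).imp (ψ.toLA σ)
  | .all x φ => .all x (φ.toLA σ)
  | .ex x φ => .ex x (φ.toLA σ)

/-- Acceptability of the arithmetical substitution `σ` for a predicate formula. -/
def PFml.AcceptLA (σ : ℕ → ℕ → LAFml) : PFml → Prop
  | .atom i args => (σ args.length i).FreeForM
      (fun v => if h : v < args.length then (args.get ⟨v, h⟩).toLA else .var v)
  | .and φ ψ => φ.AcceptLA σ ∧ ψ.AcceptLA σ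
  | .or φ ψ => φ.AcceptLA σ ∧ ψ.AcceptLA σ
  | .imp φ ψ => φ.AcceptLA σ ∧ ψ.AcceptLA σ
  | .all x φ => (∀ n i, φ.occursP n i → x ∉ (σ n i).fv \ Finset.range n) ∧ φ.AcceptLA σ
  | .ex x φ => (∀ n i, φ.occursP n i → x ∉ (σ n i).fv \ Finset.range n) ∧ φ.AcceptLA σ
  | .bot => True

/-- The standard arithmetical reading of the predicate symbols `Z,E,S,A,M`. -/
def arithSig : ℕ → ℕ → LAFml
  | 1, 0 => .eq (.var 0) .zero
  | 2, 0 => .eq (.var 0) (.var 1)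
  | 2, 1 => .eq (.succ (.var 0)) (.var 1)
  | 3, 0 => .eq (.add (.var 0) (.var 1)) (.var 2)
  | 3, 1 => .eq (.mul (.var 0) (.var 1)) (.var 2)
  | _, _ => .eq .zero (.succ .zero)

/-- An instance of the Markov scheme `M` in the language `LA`. -/
def MinstLA (x : ℕ) (φ : LAFml) : LAFml :=
  ((LAFml.all x (φ.or φ.not)).and (LAFml.ex x φ).not.not).imp (.ex x φ)

/-- An instance of the scheme `nCT` in the language `LA` (with `x,y,e` the variables
`0,1,2`): `∀x(¬Ψ(x) → ∃y Φ(x,y)) → ∃e ∀x(¬Ψ(x) → ∃y(G(e,x,y) & Φ(x,y)))`. -/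
def nCTinstLA (GLA Ψ Φ : LAFml) : LAFml :=
  (LAFml.all 0 (Ψ.not.imp (.ex 1 Φ))).imp
    (.ex 2 (.all 0 (Ψ.not.imp (.ex 1 ((GLA.msub fun v =>
      if v = 0 then .var 2 else if v = 1 then .var 0 else
        if v = 2 then .var 1 else .var v).and Φ)))))

/-- The axioms of Markov arithmetic `MA = HA + M + nCT`. -/
def MAax (GLA : LAFml) (ψ : LAFml) : Prop :=
  HAax ψ ∨ (∃ x φ, ψ = MinstLA x φ) ∨
    (∃ Ψ Φ : LAFml, 1 ∉ Ψ.fv ∧ 2 ∉ Ψ.fv ∧ 2 ∉ Φ.fv ∧ ψ = nCTinstLA GLA Ψ Φ)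

/-- The axioms of the theory `CA`: the Peano axioms (those of `HA`) together with all
arithmetical substitutional instances of the predicate formulas `M` and `nCT*`. -/
def CAax (G B : PFml) (ψ : LAFml) : Prop :=
  HAax ψ ∨ (∃ σ, Mfml.AcceptLA σ ∧ ψ = Mfml.toLA σ) ∨
    (∃ σ, (nCTstar G B).AcceptLA σ ∧ ψ = (nCTstar G B).toLA σ)


/-- The interpretation `f` is a model of the closed formula `Φ` if `Φ` is
`f`-realizable. -/
def IsModel (f : Interp) (φ : PFml) : Prop := ∃ e, Realizes f rho0 e φ

/-- A natural number `a` is `f`-standard if the formula `[n](a)` is `f`-realizable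
for some `n`. -/
def fStandard (f : Interp) (a : ℕ) : Prop :=
  ∃ n e, Realizes f rho0 e (numFt n (.const a))

/-- The scheme `nCT` (with `P` the unary predicate variable `P¹₀` and `Q'` the binary
predicate variable `P²₀`, and `x,y,z` the variables `0,1,2`):
`∀x(¬P(x) → ∃y Q'(x,y)) → ∃z ∀x (¬P(x) → ∃y (G(z,x,y) & Q'(x,y)))`. -/
def nCTscheme (GS : Scheme) : Scheme :=
  (Scheme.all 0 ((Scheme.patom 0 [.var 0]).not.imp
      (.ex 1 (.patom 0 [.var 0, .var 1])))).imp
    (.ex 2 (.all 0 ((Scheme.patom 0 [.var 0]).not.imp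
      (.ex 1 ((GS.msub fun v => if v = 0 then .var 2 else if v = 1 then .var 0 else
          if v = 2 then .var 1 else .var v).and (.patom 0 [.var 0, .var 1]))))))

/-- The arithmetical formula `Φ(x) = ∃y (Z(y) & G(x,x,y))` (with `x,y` the
variables `0,1`), expressing `{x}(x) = 0`. -/
def PhiX (G : PFml) : PFml :=
  .ex 1 ((vZ (.var 1)).and (G.msub fun v =>
    if v = 0 then .var 0 else if v = 1 then .var 0 else
      if v = 2 then .var 1 else .var v))

/-- The predicate formula `Ψ* = (Q → Ψ)` where `Ψ = ¬∀x(¬Φ(x) ∨ Φ(x))` and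
`Φ(x) = ∃y(Z(y) & G(x,x,y))`. -/
def PsiStar (G B : PFml) : PFml :=
  (Qfml G B).imp (PFml.not (.all 0 (((PhiX G).not).or (PhiX G))))

end Cpc

/-! From `{a}(x)`, a realizer of `¬P(x) → ∃y Q'(x,y)`, one computes `v = {{a}(x)}(0)`: a negation
is realized by every number as soon as it is realized by one, so if `¬P(x)` is realizable then `0`
realizes it and `v` realizes `∃y Q'(x,y)`. Neither `f` nor the realizer of `¬P(x)` enters into `v`,
so `x ↦ (v)₀` is a partial recursive function whose index `z` is computed from `a` alone. The
`Σ`-sentence `G(z,x,(v)₀)` is then true, and a true `Σ`-sentence has a realizer that is found by a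
search independent of the interpretation. -/

namespace Cpc

section RecursionTheory

variable {α : Type} [Primcodable α]

/-- The code `2^a * 3^b` of a pair, whose components are recovered by `pexp 0` and `pexp 1`. -/
def expPair (a b : ℕ) : ℕ := 2 ^ a * 3 ^ b

@[simp]
theorem pexp_zero_expPair (a b : ℕ) : pexp 0 (expPair a b) = a := by
  have h : (3 : ℕ).factorization 2 = 0 := Nat.factorization_eq_zero_of_not_dvd (by decide)
  simp [pexp, expPair, Nat.nth_prime_zero_eq_two, Nat.factorization_mul, Nat.factorization_pow,
    Nat.prime_two.factorization_self, h]

@[simp]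
theorem pexp_one_expPair (a b : ℕ) : pexp 1 (expPair a b) = b := by
  have h : (2 : ℕ).factorization 3 = 0 := Nat.factorization_eq_zero_of_not_dvd (by decide)
  simp [pexp, expPair, Nat.nth_prime_one_eq_three, Nat.factorization_mul, Nat.factorization_pow,
    Nat.prime_three.factorization_self, h]

theorem primrec_pow : Primrec₂ fun a b : ℕ => a ^ b :=
  Primrec₂.unpaired'.1 Nat.Primrec.pow

theorem primrec_expPair : Primrec₂ expPair :=
  Primrec.nat_mul.comp (primrec_pow.comp (.const 2) .fst) (primrec_pow.comp (.const 3) .snd)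

theorem primrec_factorization {p : ℕ} (hp : p.Prime) :
    Primrec fun n : ℕ => n.factorization p := by
  have hdvd : PrimrecRel fun n k : ℕ => n % p ^ k = 0 :=
    Primrec.eq.comp (Primrec.nat_mod.comp .fst (primrec_pow.comp (.const p) .snd)) (.const 0)
  refine (Primrec.nat_findGreatest .id hdvd).of_eq fun n => ?_
  rcases eq_or_ne n 0 with rfl | hn
  · simp
  rw [Nat.findGreatest_eq_iff]
  refine ⟨(Nat.factorization_lt p hn).le, fun _ => Nat.mod_eq_zero_of_dvd (Nat.ordProj_dvd n p),
    fun k hk _ hmod => hk.not_ge ?_⟩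
  exact (hp.pow_dvd_iff_le_factorization hn).1 (Nat.dvd_of_mod_eq_zero hmod)

theorem primrec_pexp (i : ℕ) : Primrec (pexp i) :=
  primrec_factorization (Nat.prime_nth_prime i)

theorem partrec_K : Partrec₂ K :=
  Nat.Partrec.Code.eval_part.comp ((Computable.ofNat _).comp .fst) .snd

theorem primrecRel_exists_lt {R : ℕ → α → Prop} (hR : PrimrecRel R) :
    PrimrecRel fun n a => ∃ k < n, R k a :=
  (hR.exists_mem_list.comp (Primrec.list_range.comp .fst) .snd).of_eq fun _ => by simp

theorem primrecRel_forall_lt {R : ℕ → α → Prop} (hR : PrimrecRel R) :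
    PrimrecRel fun n a => ∀ k < n, R k a :=
  (hR.forall_mem_list.comp (Primrec.list_range.comp .fst) .snd).of_eq fun _ => by simp

/-- The s-m-n theorem. -/
theorem exists_primrec_index {F : α → ℕ →. ℕ} (hF : Partrec₂ F) :
    ∃ c : α → ℕ, Primrec c ∧ ∀ a, K (c a) = F a := by
  have huncurried : Partrec fun m : ℕ =>
      (Part.ofOption (Encodable.decode (α := α) m.unpair.1)).bind fun a => F a m.unpair.2 :=
    (Computable.ofOption (Computable.decode.comp (Computable.fst.comp .unpair))).bind
      (hF.comp .snd ((Computable.snd.comp .unpair).comp .fst))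
  obtain ⟨code, hcode⟩ := Nat.Partrec.Code.exists_code.1 (Partrec.nat_iff.1 huncurried)
  refine ⟨fun a => Encodable.encode (code.curry (Encodable.encode a)),
    Primrec.encode.comp (Nat.Partrec.Code.primrec₂_curry.comp (.const code) .encode), fun a => ?_⟩
  funext n
  simp [K, Nat.Partrec.Code.eval_curry, hcode]

end RecursionTheory

section SigmaOne

variable {α : Type} [Primcodable α] {p q : α → Prop}

/-- `Σ₁` predicates: projections of primitive recursive relations. This normal form of recursive
enumerability keeps a witness relation at hand to search through. -/
def SigmaOnePred (p : α → Prop) : Prop :=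
  ∃ R : α → ℕ → Prop, PrimrecRel R ∧ ∀ a, p a ↔ ∃ n, R a n

namespace SigmaOnePred

theorem of_primrecPred (hp : PrimrecPred p) : SigmaOnePred p :=
  ⟨fun a _ => p a, hp.comp .fst, fun _ => exists_const ℕ |>.symm⟩

theorem of_eq (hp : SigmaOnePred p) (h : ∀ a, p a ↔ q a) : SigmaOnePred q := by
  obtain ⟨R, hR, hpR⟩ := hp
  exact ⟨R, hR, fun a => (h a).symm.trans (hpR a)⟩

theorem and (hp : SigmaOnePred p) (hq : SigmaOnePred q) : SigmaOnePred fun a => p a ∧ q a := by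
  obtain ⟨R, hR, hpR⟩ := hp
  obtain ⟨S, hS, hqS⟩ := hq
  refine ⟨fun a n => R a n.unpair.1 ∧ S a n.unpair.2,
    (hR.comp .fst (Primrec.fst.comp (Primrec.unpair.comp .snd))).and
      (hS.comp .fst (Primrec.snd.comp (Primrec.unpair.comp .snd))), fun a => ?_⟩
  simp only [hpR, hqS]
  constructor
  · rintro ⟨⟨m, hm⟩, n, hn⟩
    exact ⟨Nat.pair m n, by simpa using ⟨hm, hn⟩⟩
  · rintro ⟨n, hm, hn⟩
    exact ⟨⟨_, hm⟩, _, hn⟩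

theorem or (hp : SigmaOnePred p) (hq : SigmaOnePred q) : SigmaOnePred fun a => p a ∨ q a := by
  obtain ⟨R, hR, hpR⟩ := hp
  obtain ⟨S, hS, hqS⟩ := hq
  exact ⟨fun a n => R a n ∨ S a n, PrimrecPred.or hR hS,
    fun a => by simp only [hpR, hqS, exists_or]⟩

theorem exists_nat {p : α × ℕ → Prop} (hp : SigmaOnePred p) :
    SigmaOnePred fun a => ∃ k, p (a, k) := by
  obtain ⟨R, hR, hpR⟩ := hp
  refine ⟨fun a n => R (a, n.unpair.1) n.unpair.2,
    hR.comp (Primrec.fst.pair (Primrec.fst.comp (Primrec.unpair.comp .snd)))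
      (Primrec.snd.comp (Primrec.unpair.comp .snd)), fun a => ?_⟩
  simp only [hpR]
  constructor
  · rintro ⟨k, n, h⟩
    exact ⟨Nat.pair k n, by simpa using h⟩
  · rintro ⟨n, h⟩
    exact ⟨_, _, h⟩

/-- Collection: the finitely many witnesses required have a common bound. -/
theorem forall_lt {p : α × ℕ → Prop} (hp : SigmaOnePred p) {b : α → ℕ} (hb : Primrec b) :
    SigmaOnePred fun a => ∀ k < b a, p (a, k) := by
  obtain ⟨R, hR, hpR⟩ := hp
  have hbounded : PrimrecRel fun (k : ℕ) (x : α × ℕ) => ∃ n < x.2, R (x.1, k) n :=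
    (primrecRel_exists_lt (R := fun n (y : α × ℕ) => R y n) (hR.comp .snd .fst)).comp
      (Primrec.snd.comp .snd) ((Primrec.fst.comp .snd).pair .fst)
  refine ⟨fun a N => ∀ k < b a, ∃ n < N, R (a, k) n,
    (primrecRel_forall_lt hbounded).comp (hb.comp .fst) .id, fun a => ?_⟩
  simp only [hpR]
  constructor
  · intro h
    choose! wit hwit using h
    refine ⟨(Finset.range (b a)).sup wit + 1, fun k hk => ⟨wit k, ?_, hwit k hk⟩⟩
    exact Nat.lt_succ_of_le (Finset.le_sup (Finset.mem_range.2 hk))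
  · rintro ⟨N, hN⟩ k hk
    obtain ⟨n, -, hn⟩ := hN k hk
    exact ⟨n, hn⟩

theorem exists_partrec_selector {p : α × ℕ → Prop} (hp : SigmaOnePred p) :
    ∃ s : α →. ℕ, Partrec s ∧ ∀ a, (∃ k, p (a, k)) → ∃ k ∈ s a, p (a, k) := by
  classical
  obtain ⟨R, hR, hpR⟩ := hp
  have hsearch : PrimrecRel fun (a : α) (n : ℕ) => R (a, n.unpair.1) n.unpair.2 :=
    hR.comp (Primrec.fst.pair (Primrec.fst.comp (Primrec.unpair.comp .snd)))
      (Primrec.snd.comp (Primrec.unpair.comp .snd))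
  have hfind : Partrec fun a =>
      Nat.rfind fun n => (Part.some (decide (R (a, n.unpair.1) n.unpair.2)) : Part Bool) :=
    Partrec.rfind hsearch.decide.to_comp
  have hfst : Computable₂ fun (_ : α) n => (Nat.unpair n).1 :=
    Computable.fst.comp (Computable.unpair.comp .snd)
  refine ⟨_, hfind.map hfst, fun a ⟨k, hk⟩ => ?_⟩
  obtain ⟨n, hn⟩ := (hpR (a, k)).1 hk
  obtain ⟨m, hm, -⟩ := Nat.rfind_min' (p := fun n => decide (R (a, n.unpair.1) n.unpair.2))
    (m := Nat.pair k n) (by simpa using hn)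
  have hRm : R (a, m.unpair.1) m.unpair.2 := by simpa using Nat.rfind_spec hm
  exact ⟨_, Part.mem_map _ hm, (hpR _).2 ⟨_, hRm⟩⟩

end SigmaOnePred

end SigmaOne

section Terms

variable {α β : Type} [Primcodable α] [Primcodable β]

theorem PTerm.eval_update_of_notMem (t : PTerm) (ρ : ℕ → ℕ) {x : ℕ} (a : ℕ) (hx : x ∉ t.fv) :
    t.eval (Function.update ρ x a) = t.eval ρ := by
  cases t with
  | var v => exact Function.update_of_ne (by simpa [PTerm.fv, eq_comm] using hx) _ _
  | const c => rfl

theorem PTerm.eval_msub_of_eqOn {s : ℕ → PTerm} {ρ σ : ℕ → ℕ} (t : PTerm)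
    (h : ∀ v ∈ t.fv, (s v).eval ρ = σ v) : (t.msub s).eval ρ = t.eval σ := by
  cases t with
  | var v => exact h v (Finset.mem_singleton_self v)
  | const c => rfl

/-- A family of valuations whose value at each variable is a primitive recursive function of the
parameter. Only finitely many variables occur in a formula, so no uniformity in the variable is
asked for. -/
def PrimrecValuation (ρ : α → ℕ → ℕ) : Prop := ∀ v, Primrec fun a => ρ a v

namespace PrimrecValuation

variable {ρ : α → ℕ → ℕ}

theorem const (σ : ℕ → ℕ) : PrimrecValuation fun _ : α => σ := fun v => .const (σ v)

theorem comp (hρ : PrimrecValuation ρ) {f : β → α} (hf : Primrec f) :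
    PrimrecValuation fun b => ρ (f b) := fun v => (hρ v).comp hf

theorem update (hρ : PrimrecValuation ρ) (x : ℕ) {g : α → ℕ} (hg : Primrec g) :
    PrimrecValuation fun a => Function.update (ρ a) x (g a) := by
  intro v
  rcases eq_or_ne v x with rfl | hv
  · simpa only [Function.update_self] using hg
  · simpa only [Function.update_of_ne hv] using hρ v

theorem extend (hρ : PrimrecValuation ρ) (x : ℕ) :
    PrimrecValuation fun b : α × ℕ => Function.update (ρ b.1) x b.2 :=
  (hρ.comp .fst).update x .snd

theorem eval (hρ : PrimrecValuation ρ) (t : PTerm) : Primrec fun a => t.eval (ρ a) := by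
  cases t with
  | var v => exact hρ v
  | const c => exact .const c

theorem msub (hρ : PrimrecValuation ρ) (s : ℕ → PTerm) :
    PrimrecValuation fun a v => (s v).eval (ρ a) := fun v => hρ.eval (s v)

end PrimrecValuation

end Terms

section Truth

variable {φ : Scheme}

theorem sTrue_leS_update {ρ : ℕ → ℕ} {x z a : ℕ} {t : PTerm} (hx : x ∉ t.fv) (hz : z ∉ t.fv)
    (hzx : z ≠ x) : STrue (Function.update ρ x a) (leS z x t) ↔ a ≤ t.eval ρ := by
  simp only [leS, STrue, t.eval_update_of_notMem _ _ hz, t.eval_update_of_notMem _ _ hx]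
  generalize t.eval ρ = b
  simp only [PTerm.eval, Function.update_self, Function.update_of_ne hzx.symm]
  exact ⟨fun ⟨c, hc⟩ => by omega, fun hab => ⟨b - a, Nat.sub_add_cancel hab⟩⟩

theorem sTrue_ball {ρ : ℕ → ℕ} {x z : ℕ} {t : PTerm} (hx : x ∉ t.fv) (hz : z ∉ t.fv)
    (hzx : z ≠ x) : STrue ρ (.all x ((leS z x t).imp φ)) ↔
      ∀ a < t.eval ρ + 1, STrue (Function.update ρ x a) φ := by
  simp only [STrue, sTrue_leS_update hx hz hzx, Nat.lt_succ_iff]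

theorem sTrue_bex {ρ : ℕ → ℕ} {x z : ℕ} {t : PTerm} (hx : x ∉ t.fv) (hz : z ∉ t.fv)
    (hzx : z ≠ x) : STrue ρ (.ex x ((leS z x t).and φ)) ↔
      ∃ a < t.eval ρ + 1, STrue (Function.update ρ x a) φ := by
  simp only [STrue, sTrue_leS_update hx hz hzx, Nat.lt_succ_iff]

theorem IsDelta0S.primrecPred_sTrue (hφ : IsDelta0S φ) :
    ∀ {α : Type} [Primcodable α] {ρ : α → ℕ → ℕ}, PrimrecValuation ρ →
      PrimrecPred fun a => STrue (ρ a) φ := by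
  induction hφ with intro α _ ρ hρ
  | bot =>
    exact (Primrec.eq.comp (.const 0) (.const 1) : PrimrecPred fun _ => (0 : ℕ) = 1).of_eq
      fun _ => by simp [STrue]
  | sZ t => exact Primrec.eq.comp (hρ.eval t) (.const 0)
  | sE t u => exact Primrec.eq.comp (hρ.eval t) (hρ.eval u)
  | sS t u => exact Primrec.eq.comp (Primrec.succ.comp (hρ.eval t)) (hρ.eval u)
  | sA t u w => exact Primrec.eq.comp (Primrec.nat_add.comp (hρ.eval t) (hρ.eval u)) (hρ.eval w)
  | sM t u w => exact Primrec.eq.comp (Primrec.nat_mul.comp (hρ.eval t) (hρ.eval u)) (hρ.eval w)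
  | and _ _ ihφ ihψ => exact (ihφ hρ).and (ihψ hρ)
  | or _ _ ihφ ihψ => exact (ihφ hρ).or (ihψ hρ)
  | imp _ _ ihφ ihψ => exact ((ihφ hρ).not.or (ihψ hρ)).of_eq fun _ => imp_iff_not_or.symm
  | @ball x z t φ hx hz hzx _ ih =>
    have hrel : PrimrecRel fun k a => STrue (Function.update (ρ a) x k) φ :=
      (ih (hρ.extend x)).comp (Primrec.snd.pair .fst)
    exact ((primrecRel_forall_lt hrel).comp (Primrec.succ.comp (hρ.eval t)) .id).of_eq
      fun a => (sTrue_ball (φ := φ) (ρ := ρ a) hx hz hzx).symm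
  | @bex x z t φ hx hz hzx _ ih =>
    have hrel : PrimrecRel fun k a => STrue (Function.update (ρ a) x k) φ :=
      (ih (hρ.extend x)).comp (Primrec.snd.pair .fst)
    exact ((primrecRel_exists_lt hrel).comp (Primrec.succ.comp (hρ.eval t)) .id).of_eq
      fun a => (sTrue_bex (φ := φ) (ρ := ρ a) hx hz hzx).symm

theorem IsSigmaS.sigmaOnePred_sTrue (hφ : IsSigmaS φ) :
    ∀ {α : Type} [Primcodable α] {ρ : α → ℕ → ℕ}, PrimrecValuation ρ →
      SigmaOnePred fun a => STrue (ρ a) φ := by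
  induction hφ with intro α _ ρ hρ
  | delta0 h => exact .of_primrecPred (h.primrecPred_sTrue hρ)
  | and _ _ ihφ ihψ => exact (ihφ hρ).and (ihψ hρ)
  | or _ _ ihφ ihψ => exact (ihφ hρ).or (ihψ hρ)
  | @ball x z t φ hx hz hzx _ ih =>
    exact ((ih (hρ.extend x)).forall_lt (Primrec.succ.comp (hρ.eval t))).of_eq
      fun a => (sTrue_ball (φ := φ) (ρ := ρ a) hx hz hzx).symm
  | @bex x z t φ hx hz hzx _ ih =>
    have hbound : PrimrecPred fun b : α × ℕ => b.2 < t.eval (ρ b.1) + 1 :=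
      Primrec.nat_lt.comp .snd (Primrec.succ.comp ((hρ.eval t).comp .fst))
    exact ((SigmaOnePred.of_primrecPred hbound).and (ih (hρ.extend x))).exists_nat.of_eq
      fun a => (sTrue_bex (φ := φ) (ρ := ρ a) hx hz hzx).symm
  | ex _ ih => exact (ih (hρ.extend _)).exists_nat

end Truth

section Realizability

variable {f : Interp} {ρ : ℕ → ℕ} {φ ψ : Scheme}

theorem sReal_and_expPair {d e : ℕ} :
    SReal f ρ (expPair d e) (φ.and ψ) ↔ SReal f ρ d φ ∧ SReal f ρ e ψ := by
  simp only [SReal, pexp_zero_expPair, pexp_one_expPair]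

theorem sReal_ex_expPair {x k e : ℕ} :
    SReal f ρ (expPair k e) (.ex x φ) ↔ SReal f (Function.update ρ x k) e φ := by
  simp only [SReal, pexp_zero_expPair, pexp_one_expPair]

theorem sReal_not_iff {e : ℕ} : SReal f ρ e φ.not ↔ ∀ d, ¬SReal f ρ d φ := by
  simp only [Scheme.not, SReal, and_false, exists_false, imp_false]

/-- `{{a}(x)}(0)`: if `a` realizes `∀x(¬φ(x) → ψ(x))` and `¬φ(x)` is realizable, then this
realizes `ψ(x)`. -/
def answer (a x : ℕ) : Part ℕ := (K a x).bind fun b => K b 0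

theorem partrec_answer : Partrec₂ answer :=
  Partrec.bind partrec_K (partrec_K.comp .snd (.const 0))

theorem exists_mem_answer_of_sReal {x a k : ℕ} (ha : SReal f ρ a (.all x (φ.not.imp ψ)))
    (hφ : ∀ d, ¬SReal f (Function.update ρ x k) d φ) :
    ∃ v ∈ answer a k, SReal f (Function.update ρ x k) v ψ := by
  obtain ⟨b, hb, himp⟩ := ha k
  obtain ⟨v, hv, hψ⟩ := himp 0 (sReal_not_iff.2 hφ)
  exact ⟨v, Part.mem_bind hb hv, hψ⟩

end Realizability

section SelfRealization

variable {φ ψ : Scheme}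

/-- A scheme is self-realizing if its realizability amounts to its classical truth in a uniform
way: a realizer is computed from the valuation whenever the scheme is true, and that realizer works
for all interpretations of the predicate variables. -/
structure SelfRealizing (φ : Scheme) : Prop where
  exists_realizer : ∀ {α : Type} [Primcodable α] {ρ : α → ℕ → ℕ}, PrimrecValuation ρ →
    ∃ w : α →. ℕ, Partrec w ∧ ∀ a, STrue (ρ a) φ → ∃ e ∈ w a, ∀ f, SReal f (ρ a) e φ
  sTrue_of_sReal : ∀ {f : Interp} {ρ : ℕ → ℕ} {e : ℕ}, SReal f ρ e φ → STrue ρ φ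

namespace SelfRealizing

theorem exists_sReal (hφ : SelfRealizing φ) {ρ : ℕ → ℕ} (h : STrue ρ φ) :
    ∃ e, ∀ f, SReal f ρ e φ := by
  obtain ⟨w, -, hw⟩ := hφ.exists_realizer (α := Unit) (.const ρ)
  obtain ⟨e, -, he⟩ := hw () h
  exact ⟨e, he⟩

theorem of_sReal_iff (h : ∀ f ρ e, SReal f ρ e φ ↔ e = 0 ∧ STrue ρ φ) : SelfRealizing φ where
  exists_realizer _ := ⟨fun _ => Part.some 0, Computable.partrec (.const 0),
    fun _ hφ => ⟨0, Part.mem_some 0, fun _ => (h _ _ _).2 ⟨rfl, hφ⟩⟩⟩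
  sTrue_of_sReal hφ := ((h _ _ _).1 hφ).2

theorem and (hφ : SelfRealizing φ) (hψ : SelfRealizing ψ) : SelfRealizing (φ.and ψ) where
  exists_realizer hρ := by
    obtain ⟨u, hu, huφ⟩ := hφ.exists_realizer hρ
    obtain ⟨w, hw, hwψ⟩ := hψ.exists_realizer hρ
    refine ⟨fun a => (u a).bind fun d => (w a).map (expPair d),
      hu.bind ((hw.comp .fst).map (primrec_expPair.to_comp.comp (Computable.snd.comp .fst) .snd)),
      fun a ⟨hφa, hψa⟩ => ?_⟩
    obtain ⟨d, hd, hdφ⟩ := huφ a hφa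
    obtain ⟨e, he, heψ⟩ := hwψ a hψa
    refine ⟨expPair d e, Part.mem_bind hd (Part.mem_map _ he), fun f => ?_⟩
    exact sReal_and_expPair.2 ⟨hdφ f, heψ f⟩
  sTrue_of_sReal h := ⟨hφ.sTrue_of_sReal h.1, hψ.sTrue_of_sReal h.2⟩

theorem or (hφ : SelfRealizing φ) (hψ : SelfRealizing ψ) (hφσ : IsSigmaS φ) (hψσ : IsSigmaS ψ) :
    SelfRealizing (φ.or ψ) where
  exists_realizer {α _ ρ} hρ := by
    obtain ⟨u, hu, huφ⟩ := hφ.exists_realizer hρ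
    obtain ⟨w, hw, hwψ⟩ := hψ.exists_realizer hρ
    have hindex (i : ℕ) : SigmaOnePred fun b : α × ℕ => b.2 = i :=
      .of_primrecPred (Primrec.eq.comp .snd (.const i))
    obtain ⟨s, hs, hsel⟩ := SigmaOnePred.exists_partrec_selector
      (((hindex 0).and (hφσ.sigmaOnePred_sTrue (hρ.comp .fst))).or
        ((hindex 1).and (hψσ.sigmaOnePred_sTrue (hρ.comp .fst))))
    have hcases : Partrec₂ fun a i => bif i == 0 then u a else w a :=
      .cond (Primrec.beq.comp .snd (.const 0)).to_comp (hu.comp .fst) (hw.comp .fst)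
    refine ⟨fun a => (s a).bind fun i => (bif i == 0 then u a else w a).map (expPair i),
      hs.bind (hcases.map (primrec_expPair.to_comp.comp (Computable.snd.comp .fst) .snd)),
      fun a hor => ?_⟩
    obtain ⟨i, hi, ⟨rfl, hφa⟩ | ⟨rfl, hψa⟩⟩ :=
      hsel a (hor.elim (fun h => ⟨0, .inl ⟨rfl, h⟩⟩) fun h => ⟨1, .inr ⟨rfl, h⟩⟩)
    · obtain ⟨d, hd, hdφ⟩ := huφ a hφa
      refine ⟨expPair 0 d, Part.mem_bind hi (Part.mem_map _ hd), fun f => .inl ?_⟩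
      simpa using hdφ f
    · obtain ⟨e, he, heψ⟩ := hwψ a hψa
      refine ⟨expPair 1 e, Part.mem_bind hi (Part.mem_map _ he), fun f => .inr ?_⟩
      simpa using heψ f
  sTrue_of_sReal h :=
    h.imp (fun h => hφ.sTrue_of_sReal h.2) fun h => hψ.sTrue_of_sReal h.2

theorem imp (hφ : SelfRealizing φ) (hψ : SelfRealizing ψ) : SelfRealizing (φ.imp ψ) where
  exists_realizer hρ := by
    obtain ⟨w, hw, hwψ⟩ := hψ.exists_realizer hρ
    obtain ⟨c, hc, hKc⟩ := exists_primrec_index (F := fun a _ => w a) (hw.comp .fst)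
    refine ⟨fun a => Part.some (c a), hc.to_comp.partrec,
      fun a himp => ⟨c a, Part.mem_some _, fun f d hd => ?_⟩⟩
    obtain ⟨e, he, heψ⟩ := hwψ a (himp (hφ.sTrue_of_sReal hd))
    exact ⟨e, by rwa [hKc], heψ f⟩
  sTrue_of_sReal h hφρ := by
    obtain ⟨d, hd⟩ := hφ.exists_sReal hφρ
    obtain ⟨e, -, he⟩ := h d (hd _)
    exact hψ.sTrue_of_sReal he

theorem all (x : ℕ) (hφ : SelfRealizing φ) : SelfRealizing (.all x φ) where
  exists_realizer hρ := by
    obtain ⟨w, hw, hwφ⟩ := hφ.exists_realizer (hρ.extend x)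
    obtain ⟨c, hc, hKc⟩ := exists_primrec_index (F := fun a k => w (a, k)) hw
    refine ⟨fun a => Part.some (c a), hc.to_comp.partrec,
      fun a hall => ⟨c a, Part.mem_some _, fun f k => ?_⟩⟩
    obtain ⟨e, he, heφ⟩ := hwφ (a, k) (hall k)
    exact ⟨e, by rwa [hKc], heφ f⟩
  sTrue_of_sReal h k := by
    obtain ⟨e, -, he⟩ := h k
    exact hφ.sTrue_of_sReal he

theorem ex (x : ℕ) (hφ : SelfRealizing φ) (hφσ : IsSigmaS φ) : SelfRealizing (.ex x φ) where
  exists_realizer hρ := by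
    obtain ⟨w, hw, hwφ⟩ := hφ.exists_realizer (hρ.extend x)
    obtain ⟨s, hs, hsel⟩ := (hφσ.sigmaOnePred_sTrue (hρ.extend x)).exists_partrec_selector
    refine ⟨fun a => (s a).bind fun k => (w (a, k)).map (expPair k),
      hs.bind (hw.map (primrec_expPair.to_comp.comp (Computable.snd.comp .fst) .snd)),
      fun a hex => ?_⟩
    obtain ⟨k, hk, hφk⟩ := hsel a hex
    obtain ⟨e, he, heφ⟩ := hwφ (a, k) hφk
    refine ⟨expPair k e, Part.mem_bind hk (Part.mem_map _ he), fun f => ?_⟩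
    exact sReal_ex_expPair.2 (heφ f)
  sTrue_of_sReal h := ⟨_, hφ.sTrue_of_sReal h⟩

theorem leS (z x : ℕ) (t : PTerm) : SelfRealizing (leS z x t) :=
  .ex z (.of_sReal_iff fun _ _ _ => .rfl) (.delta0 (.sA _ _ _))

end SelfRealizing

theorem isSigmaS_leS (z x : ℕ) (t : PTerm) : IsSigmaS (leS z x t) :=
  .ex (.delta0 (.sA _ _ _))

theorem IsDelta0S.selfRealizing (hφ : IsDelta0S φ) : SelfRealizing φ := by
  induction hφ with
  | bot => exact .of_sReal_iff fun _ _ _ => by simp only [SReal, STrue, and_false]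
  | sZ | sE | sS | sA | sM => exact .of_sReal_iff fun _ _ _ => .rfl
  | and _ _ ihφ ihψ => exact ihφ.and ihψ
  | or hφ hψ ihφ ihψ => exact ihφ.or ihψ (.delta0 hφ) (.delta0 hψ)
  | imp _ _ ihφ ihψ => exact ihφ.imp ihψ
  | ball _ _ _ _ ih => exact ((SelfRealizing.leS _ _ _).imp ih).all _
  | bex _ _ _ hφ ih =>
    exact ((SelfRealizing.leS _ _ _).and ih).ex _ ((isSigmaS_leS _ _ _).and (.delta0 hφ))

theorem IsSigmaS.selfRealizing (hφ : IsSigmaS φ) : SelfRealizing φ := by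
  induction hφ with
  | delta0 h => exact h.selfRealizing
  | and _ _ ihφ ihψ => exact ihφ.and ihψ
  | or hφ hψ ihφ ihψ => exact ihφ.or ihψ hφ hψ
  | ball _ _ _ _ ih => exact ((SelfRealizing.leS _ _ _).imp ih).all _
  | bex _ _ _ hφ ih => exact ((SelfRealizing.leS _ _ _).and ih).ex _ ((isSigmaS_leS _ _ _).and hφ)
  | ex hφ ih => exact ih.ex _ hφ

end SelfRealization

section Substitution

variable {f : Interp} {ρ σ : ℕ → ℕ} {s : ℕ → PTerm} {φ : Scheme}

theorem sReal_patom {e i : ℕ} {args : List PTerm} : SReal f ρ e (.patom i args) ↔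
    e ∈ f (args.map (PTerm.eval ρ)).length i (args.map (PTerm.eval ρ)).get := by
  have hcast {m n : ℕ} (h : m = n) (v : Fin n → ℕ) : f m i (v ∘ Fin.cast h) = f n i v := by
    subst h; rfl
  have hlength : args.length = (args.map (PTerm.eval ρ)).length := List.length_map _ |>.symm
  have hget : (fun j => (args.get j).eval ρ) =
      (args.map (PTerm.eval ρ)).get ∘ Fin.cast hlength := by
    ext
    simp
  rw [SReal, hget, hcast hlength]

theorem sReal_patom_congr {e i : ℕ} {args args' : List PTerm}
    (h : args.map (PTerm.eval ρ) = args'.map (PTerm.eval σ)) :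
    SReal f ρ e (.patom i args) ↔ SReal f σ e (.patom i args') := by
  rw [sReal_patom, sReal_patom, h]

theorem Scheme.mem_fv_patom {i v : ℕ} {args : List PTerm} :
    v ∈ (Scheme.patom i args).fv ↔ ∃ t ∈ args, v ∈ t.fv := by
  induction args with
  | nil => simp [Scheme.fv]
  | cons t args ih => simpa [Scheme.fv] using or_congr_right ih

theorem eval_lift_update {x : ℕ} (hfree : ∀ v ∈ φ.fv, v ≠ x → x ∉ (s v).fv)
    (h : ∀ v ∈ φ.fv.erase x, (s v).eval ρ = σ v) (a : ℕ) :
    ∀ v ∈ φ.fv, (if v = x then PTerm.var x else s v).eval (Function.update ρ x a) =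
      Function.update σ x a v := by
  intro v hv
  rcases eq_or_ne v x with rfl | hvx
  · simp only [if_pos, PTerm.eval, Function.update_self]
  · rw [if_neg hvx, PTerm.eval_update_of_notMem _ _ _ (hfree v hv hvx), Function.update_of_ne hvx,
      h v (Finset.mem_erase.2 ⟨hvx, hv⟩)]

theorem sReal_msub {e : ℕ} (hfree : φ.FreeForM s) (h : ∀ v ∈ φ.fv, (s v).eval ρ = σ v) :
    SReal f ρ e (φ.msub s) ↔ SReal f σ e φ := by
  induction φ generalizing ρ σ s e with
  | bot => rfl
  | patom i args =>
    have hargs : (args.map (PTerm.msub s)).map (PTerm.eval ρ) = args.map (PTerm.eval σ) := by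
      simp only [List.map_map, List.map_inj_left]
      exact fun t ht => t.eval_msub_of_eqOn fun v hv => h v (Scheme.mem_fv_patom.2 ⟨t, ht, hv⟩)
    exact sReal_patom_congr hargs
  | sZ t => simp only [Scheme.msub, SReal, t.eval_msub_of_eqOn h]
  | sE t u | sS t u =>
    simp only [Scheme.fv, Finset.forall_mem_union] at h
    simp only [Scheme.msub, SReal, t.eval_msub_of_eqOn h.1, u.eval_msub_of_eqOn h.2]
  | sA t u w | sM t u w =>
    simp only [Scheme.fv, Finset.forall_mem_union] at h
    simp only [Scheme.msub, SReal, t.eval_msub_of_eqOn h.1.1, u.eval_msub_of_eqOn h.1.2,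
      w.eval_msub_of_eqOn h.2]
  | and φ ψ ihφ ihψ | or φ ψ ihφ ihψ | imp φ ψ ihφ ihψ =>
    simp only [Scheme.fv, Finset.forall_mem_union] at h
    simp only [Scheme.msub, SReal, ihφ hfree.1 h.1, ihψ hfree.2 h.2]
  | all x φ ih =>
    have hlift := eval_lift_update hfree.1 h
    exact forall_congr' fun a => exists_congr fun b => and_congr_right' (ih hfree.2 (hlift a))
  | ex x φ ih => exact ih hfree.2 (eval_lift_update hfree.1 h _)

theorem Scheme.freeForM_of_forall_bv (h : ∀ x ∈ φ.bv, ∀ v ≠ x, x ∉ (s v).fv) :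
    φ.FreeForM s := by
  induction φ generalizing s with
  | and φ ψ ihφ ihψ | or φ ψ ihφ ihψ | imp φ ψ ihφ ihψ =>
    exact ⟨ihφ fun x hx => h x (Finset.mem_union_left _ hx),
      ihψ fun x hx => h x (Finset.mem_union_right _ hx)⟩
  | all x φ ih | ex x φ ih =>
    refine ⟨fun v _ => h x (Finset.mem_insert_self x _) v, ih fun y hy v hvy => ?_⟩
    split_ifs with hvx
    · simpa [PTerm.fv, ← hvx] using hvy.symm
    · exact h y (Finset.mem_insert_of_mem hy) v hvy
  | _ => trivial

end Substitution

section ChurchThesis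

/-- The substitution by which `nCTscheme` turns the graph formula `G`, written in the variables
`0, 1, 2`, into `G(z,x,y)` with `z, x, y` the variables `2, 0, 1`. -/
def graphSubst : ℕ → PTerm := fun v =>
  if v = 0 then .var 2 else if v = 1 then .var 0 else if v = 2 then .var 1 else .var v

/-- The valuation under which the matrix of the conclusion of `nCTscheme` is realized, the
variables being assigned in the order of its quantifiers `∃z ∀x ∃y`. -/
def nCTValuation (z x y : ℕ) : ℕ → ℕ :=
  Function.update (Function.update (Function.update rho0 2 z) 0 x) 1 y

theorem freeForM_graphSubst {G : Scheme} (hG : ∀ x ∈ G.bv, 3 ≤ x) : G.FreeForM graphSubst := by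
  refine Scheme.freeForM_of_forall_bv fun x hx v hvx => ?_
  have hx3 : 3 ≤ x := hG x hx
  unfold graphSubst
  split_ifs <;> simp only [PTerm.fv, Finset.mem_singleton] <;> omega

theorem primrecValuation_nCTValuation :
    PrimrecValuation fun t : ℕ × ℕ × ℕ => nCTValuation t.1 t.2.1 t.2.2 :=
  (((PrimrecValuation.const rho0).update 2 .fst).update 0 (Primrec.fst.comp .snd)).update 1
    (Primrec.snd.comp .snd)

theorem exists_graph_realizer {G : Scheme} (hfree : G.FreeForM graphSubst) (hG : IsSigmaS G)
    (hgraph : ∀ ρ : ℕ → ℕ, K (ρ 0) (ρ 1) = Part.some (ρ 2) → STrue ρ G) :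
    ∃ w : ℕ × ℕ × ℕ →. ℕ, Partrec w ∧ ∀ z x y, K z x = Part.some y →
      ∃ u ∈ w (z, x, y), ∀ f, SReal f (nCTValuation z x y) u (G.msub graphSubst) := by
  obtain ⟨w, hw, hwG⟩ :=
    hG.selfRealizing.exists_realizer (primrecValuation_nCTValuation.msub graphSubst)
  refine ⟨w, hw, fun z x y hK => ?_⟩
  obtain ⟨u, hu, huG⟩ := hwG (z, x, y) (hgraph _ hK)
  exact ⟨u, hu, fun f => (sReal_msub hfree fun _ _ => rfl).2 (huG f)⟩

/-- The shape of a realizer of `φ → ∃z ∀x (χ → ψ)` that ignores the realizer of `χ`. -/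
theorem exists_pair_index {z : ℕ → ℕ} (hz : Primrec z) {F : ℕ → ℕ →. ℕ} (hF : Partrec₂ F) :
    ∃ (e : ℕ) (c : ℕ → ℕ) (d : ℕ → ℕ → ℕ), (∀ a, K e a = Part.some (expPair (z a) (c a))) ∧
      (∀ a x, K (c a) x = Part.some (d a x)) ∧ ∀ a x n, K (d a x) n = F a x := by
  obtain ⟨d, hd, hKd⟩ := exists_primrec_index (F := fun (p : ℕ × ℕ) (_ : ℕ) => F p.1 p.2)
    (hF.comp (Computable.fst.comp .fst) (Computable.snd.comp .fst))
  obtain ⟨c, hc, hKc⟩ := exists_primrec_index (F := fun a x => Part.some (d (a, x)))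
    hd.to_comp.partrec
  obtain ⟨e, -, hKe⟩ := exists_primrec_index
    (F := fun (_ : Unit) a => Part.some (expPair (z a) (c a)))
    ((primrec_expPair.comp hz hc).comp .snd).to_comp.partrec
  exact ⟨e (), c, fun a x => d (a, x), congrFun (hKe ()), fun a => congrFun (hKc a),
    fun a x => congrFun (hKd (a, x))⟩

theorem exists_index_fst_answer : ∃ z : ℕ → ℕ, Primrec z ∧
    ∀ a x, K (z a) x = (answer a x).map (pexp 0) := by
  have hmap : Partrec₂ fun a x => (answer a x).map (pexp 0) :=
    Partrec.map partrec_answer ((primrec_pexp 0).comp .snd).to_comp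
  obtain ⟨z, hz, hKz⟩ := exists_primrec_index hmap
  exact ⟨z, hz, fun a => congrFun (hKz a)⟩

/-- From `a` and `x`, the realizer `⟨y, u, q⟩` of `∃y (G(z,x,y) & Q'(x,y))`, where `⟨y, q⟩` is
`answer a x`, the index `z` is computed from `a`, and `w` computes the realizer `u` of
`G(z,x,y)`. -/
noncomputable def conclusionRealizer (w : ℕ × ℕ × ℕ →. ℕ) (z : ℕ → ℕ) (a x : ℕ) : Part ℕ :=
  (answer a x).bind fun v =>
    (w (z a, x, pexp 0 v)).map fun u => expPair (pexp 0 v) (expPair u (pexp 1 v))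

theorem partrec_conclusionRealizer {w : ℕ × ℕ × ℕ →. ℕ} (hw : Partrec w) {z : ℕ → ℕ}
    (hz : Primrec z) : Partrec₂ (conclusionRealizer w z) := by
  have harg : Primrec fun p : (ℕ × ℕ) × ℕ => (z p.1.1, p.1.2, pexp 0 p.2) :=
    (hz.comp (Primrec.fst.comp .fst)).pair
      ((Primrec.snd.comp .fst).pair ((primrec_pexp 0).comp .snd))
  have hresult : Primrec fun p : ((ℕ × ℕ) × ℕ) × ℕ =>
      expPair (pexp 0 p.1.2) (expPair p.2 (pexp 1 p.1.2)) :=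
    primrec_expPair.comp ((primrec_pexp 0).comp (Primrec.snd.comp .fst))
      (primrec_expPair.comp .snd ((primrec_pexp 1).comp (Primrec.snd.comp .fst)))
  exact Partrec.bind partrec_answer ((hw.comp harg.to_comp).map hresult.to_comp)

end ChurchThesis

end Cpc

open Cpc in
theorem nCT_absolutely_realizable_general (GS : Scheme) (hfree : GS.FreeForM graphSubst)
    (hsig : IsSigmaS GS)
    (hgraph : ∀ ρ : ℕ → ℕ, K (ρ 0) (ρ 1) = Part.some (ρ 2) → STrue ρ GS) :
    AbsRealizableS (nCTscheme GS) := by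
  obtain ⟨w, hw, hwG⟩ := exists_graph_realizer hfree hsig hgraph
  obtain ⟨z, hz, hKz⟩ := exists_index_fst_answer
  obtain ⟨e, c, d, hKe, hKc, hKd⟩ := exists_pair_index hz (partrec_conclusionRealizer hw hz)
  refine ⟨e, fun f a ha => ⟨expPair (z a) (c a), hKe a ▸ Part.mem_some _, ?_⟩⟩
  refine sReal_ex_expPair.2 fun x => ⟨d a x, hKc a x ▸ Part.mem_some _, fun n hn => ?_⟩
  obtain ⟨v, hv, hvQ⟩ := exists_mem_answer_of_sReal (k := x) ha fun m hm =>
    sReal_not_iff.1 hn m ((sReal_patom_congr (by rfl)).1 hm)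
  have hgraph_v : K (z a) x = Part.some (pexp 0 v) := by
    rw [hKz, Part.eq_some_iff.2 hv, Part.map_some]
  obtain ⟨u, hu, huG⟩ := hwG (z a) x (pexp 0 v) hgraph_v
  refine ⟨expPair (pexp 0 v) (expPair u (pexp 1 v)), ?_, ?_⟩
  · rw [hKd]
    exact Part.mem_bind hv (Part.mem_map _ hu)
  · exact sReal_ex_expPair.2 (sReal_and_expPair.2 ⟨huG f, (sReal_patom_congr (by rfl)).1 hvQ⟩)

/-- the scheme `nCT` is absolutely realizable. -/
theorem nCT_absolutely_realizable (GS : Cpc.Scheme)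
    (hGfv : GS.fv ⊆ {0, 1, 2}) (hGbv : ∀ v ∈ GS.bv, 10 ≤ v)
    (hGsig : Cpc.IsSigmaS GS) (hGar : GS.pvars = ∅)
    (hGdef : ∀ ρ : ℕ → ℕ, Cpc.STrue ρ GS ↔ Cpc.K (ρ 0) (ρ 1) = Part.some (ρ 2)) :
    ∃ e, ∀ f : Cpc.Interp, Cpc.SReal f Cpc.rho0 e (Cpc.nCTscheme GS) :=
  nCT_absolutely_realizable_general GS
    (Cpc.freeForM_graphSubst fun v hv => le_trans (by decide) (hGbv v hv)) hGsig
    fun ρ => (hGdef ρ).2
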